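/- arXiv:2012.10811 — 2 statements merged into one kernel-verified Lean document; each statement's English description precedes it below -/
import Mathlib

section
/- Let x, x' ∈ V^n and let ξ, ξ' be regular stacks of G such that ξ' is obtained from ξ by finitely many popping operations. Then the multi-walker stack walk (with the cyclic turn order) with initialization (x, ξ) is recurrent if and only if the multi-walker stack walk with initialization (x', ξ') is recurrent. -/
/-!
Recurrence is a property of the *abelian* system behind the walk. Forget the labels of the walkers
and record only the multiset `F` of vertices fired (popped by a walker standing there). The walkers
then sit at `σ + arr ξ F - F`, where `arr ξ F` is monotone in `F`. By the least action principle
(`Legal.le_fired`), the cyclic walk, in which each occupied vertex is eventually fired, performs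
every firing that is legal in any order. Hence the walk is recurrent iff every vertex can be legally
fired arbitrarily often (`recurrent_iff`); by regularity and connectedness a single vertex suffices
(`unbdd_iff`).

To see that popping the stack at `y` does not matter (`unbdd_pop_iff`), freeze `y` and release
the walkers `z₁, …, z_k` that its first `k` firings emit. The vertex `y` can be fired arbitrarily
often iff for every `k` more than `k` walkers can then be collected at `y` (`Unbdd.returns`,
`unbdd_of_returns`). Adding a walker to the frozen system raises the number that can be collected
by `0` or `1` (`Legal.mono`, `Legal.remove`). Popping replaces `z₁, …, z_{k+1}` by `z₂, …, z_{k+1}`, which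
loses at most one return, so recurrence survives. Conversely, `z₁` reappears as `z_{k+1}` for
infinitely many `k`, and then `z₁, …, z_k` and `z₂, …, z_{k+1}` are the same multiset, so recurrence
for the popped stack gives it for the original one.

Finally, the walkers can be relocated (`allUnbdd_adj`): a legal step does not affect recurrence, and
by popping at `v` a walker at `v` can be made to step to any prescribed neighbor.
-/

open Filter

namespace StackWalk

variable {V : Type*}

/-- The state of a multi-walker stack walk: the positions of the `n` walkers together
with the current stack. -/
abbrev State (V : Type*) (n : ℕ) := (Fin n → V) × (V → ℕ → V)

/-- `ξ` is a stack of the graph `G`: `ξ x m` is always a neighbor of `x`. -/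
def IsStack (G : SimpleGraph V) (ξ : V → ℕ → V) : Prop :=
  ∀ x m, G.Adj x (ξ x m)

/-- A stack is regular if, for every vertex `x`, every neighbor of `x` appears
infinitely many times in the stack of `x`. -/
def RegularStack (G : SimpleGraph V) (ξ : V → ℕ → V) : Prop :=
  ∀ x y, G.Adj x y → {m : ℕ | ξ x m = y}.Infinite

open Classical in
/-- The popping operation at `x`: remove the top card of the stack of `x`. -/
noncomputable def pop (x : V) (ξ : V → ℕ → V) : V → ℕ → V :=
  fun y m => if y = x then ξ y (m + 1) else ξ y m

/-- One step of the stack walk performed by walker `i`: the stack at the current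
location of walker `i` is popped, and walker `i` moves to the new top card. -/
noncomputable def step (n : ℕ) (s : State V n) (i : Fin n) : State V n :=
  (Function.update s.1 i (pop (s.1 i) s.2 (s.1 i) 0), pop (s.1 i) s.2)

/-- The multi-walker stack walk with initial locations `x0`, initial stack `ξ0` and
turn order `o` (where `o t = some i` means walker `i` moves at the `(t+1)`-st step, and
`o t = none` means nobody moves). -/
noncomputable def walk (n : ℕ) (x0 : Fin n → V) (ξ0 : V → ℕ → V)
    (o : ℕ → Option (Fin n)) : ℕ → State V n
  | 0 => (x0, ξ0)
  | t + 1 =>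
    match o t with
    | none => walk n x0 ξ0 o t
    | some i => step n (walk n x0 ξ0 o t) i

/-- A turn order is regular if every walker performs infinitely many steps. -/
def RegularOrder (n : ℕ) (o : ℕ → Option (Fin n)) : Prop :=
  ∀ i : Fin n, {t : ℕ | o t = some i}.Infinite

/-- A (trajectory of a) stack walk is recurrent if every vertex is visited infinitely
many times. -/
def Recurrent (n : ℕ) (w : ℕ → State V n) : Prop :=
  ∀ v : V, {t : ℕ | ∃ i, (w t).1 i = v}.Infinite

/-- A (trajectory of a) stack walk is transient if every vertex is visited at most
finitely many times. -/
def Transient (n : ℕ) (w : ℕ → State V n) : Prop :=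
  ∀ v : V, {t : ℕ | ∃ i, (w t).1 i = v}.Finite

end StackWalk

namespace StackWalk

/-- The stack walk with the cyclic turn order: at the `(t+1)`-st step the walker with
index `t % n` moves. -/
noncomputable def cyclicWalk (n : ℕ) (hn : 0 < n) (x0 : Fin n → V) (ξ0 : V → ℕ → V) :
    ℕ → State V n
  | 0 => (x0, ξ0)
  | t + 1 => step n (cyclicWalk n hn x0 ξ0 t) ⟨t % n, Nat.mod_lt t hn⟩

/-- `ξ'` is obtained from `ξ` by finitely many popping operations. -/
def PoppedFrom (ξ ξ' : V → ℕ → V) : Prop :=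
  ∃ l : List V, ξ' = l.foldl (fun η x => pop x η) ξ

end StackWalk

namespace StackWalk

section Abelian

open scoped Classical

variable {V : Type*}

/-! ### Arrivals produced by a multiset of firings -/

/-- The multiset of destinations produced by firing every vertex `w` exactly `F.count w` times:
the `j`-th firing of `w` uses the card `ξ w j`, for `j = 1, 2, …` (the card `ξ w 0` is discarded
by the first pop). -/
noncomputable def arr (ξ : V → ℕ → V) (F : Multiset V) : Multiset V :=
  ∑ w ∈ F.toFinset, (Multiset.range (F.count w)).map (fun j => ξ w (j + 1))

theorem arr_zero (ξ : V → ℕ → V) : arr ξ 0 = 0 := by simp [arr]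

theorem arr_eq_sum (ξ : V → ℕ → V) (F : Multiset V) (s : Finset V) (h : F.toFinset ⊆ s) :
    arr ξ F = ∑ w ∈ s, (Multiset.range (F.count w)).map (fun j => ξ w (j + 1)) := by
  refine Finset.sum_subset h fun w _ hw => ?_
  have : F.count w = 0 := by simpa using hw
  simp [this]

theorem arr_cons (ξ : V → ℕ → V) (v : V) (F : Multiset V) :
    arr ξ (v ::ₘ F) = ξ v (F.count v + 1) ::ₘ arr ξ F := by
  have hv : v ∈ (v ::ₘ F).toFinset := by simp
  rw [arr_eq_sum ξ F (v ::ₘ F).toFinset (by simp), arr, ← Finset.add_sum_erase _ _ hv,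
    ← Finset.add_sum_erase _ _ hv, Multiset.count_cons_self, Multiset.range_succ,
    Multiset.map_cons, Multiset.cons_add]
  congr 2
  refine Finset.sum_congr rfl fun w hw => ?_
  rw [Multiset.count_cons_of_ne (Finset.ne_of_mem_erase hw)]

theorem arr_mono (ξ : V → ℕ → V) {F F' : Multiset V} (h : F ≤ F') : arr ξ F ≤ arr ξ F' := by
  obtain ⟨E, rfl⟩ := Multiset.le_iff_exists_add.1 h
  clear h
  induction E using Multiset.induction_on with
  | empty => simp
  | cons v E ih =>
    rw [Multiset.add_cons, arr_cons]
    exact ih.trans (Multiset.le_cons_self _ _)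

theorem card_arr (ξ : V → ℕ → V) (F : Multiset V) : (arr ξ F).card = F.card := by
  induction F using Multiset.induction_on with
  | empty => simp [arr_zero]
  | cons v E ih => simp [arr_cons, ih]

theorem pop_apply (v w : V) (ξ : V → ℕ → V) (m : ℕ) :
    pop v ξ w m = ξ w (m + if w = v then 1 else 0) := by
  by_cases h : w = v <;> simp [pop, h]

/-- Firing `v` once and then `F` is the same as using the first card of `v` and then firing `F`
with the popped stack. -/
theorem arr_cons_pop (ξ : V → ℕ → V) (v : V) (F : Multiset V) :
    arr ξ (v ::ₘ F) = ξ v 1 ::ₘ arr (pop v ξ) F := by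
  induction F using Multiset.induction_on with
  | empty => rw [arr_cons, arr_zero, arr_zero, Multiset.count_zero]
  | cons w E ih =>
    rw [Multiset.cons_swap, arr_cons, ih, arr_cons, Multiset.cons_swap, pop_apply,
      Multiset.count_cons]
    congr 3
    omega

theorem arr_pop_of_notMem (ξ : V → ℕ → V) {y : V} {F : Multiset V} (h : y ∉ F) :
    arr (pop y ξ) F = arr ξ F := by
  induction F using Multiset.induction_on with
  | empty => simp [arr_zero]
  | cons w E ih =>
    simp only [Multiset.mem_cons, not_or] at h
    rw [arr_cons, arr_cons, ih h.2, pop_apply, if_neg (Ne.symm h.1), Nat.add_zero]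

theorem arr_add_replicate (ξ : V → ℕ → V) {y : V} {F : Multiset V} (h : y ∉ F) (k : ℕ) :
    arr ξ (F + Multiset.replicate k y) = arr ξ F + arr ξ (Multiset.replicate k y) := by
  induction F using Multiset.induction_on with
  | empty => simp [arr_zero]
  | cons w E ih =>
    simp only [Multiset.mem_cons, not_or] at h
    have : Multiset.count w (Multiset.replicate k y) = 0 := by
      rw [Multiset.count_replicate, if_neg h.1]
    rw [Multiset.cons_add, arr_cons, ih h.2, arr_cons, Multiset.cons_add, Multiset.count_add,
      this, Nat.add_zero]

/-! ### Legal firings -/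

/-- `Legal ξ σ F`: starting from anonymous walkers at the locations `σ`, the vertices of `F` can
be fired (with multiplicity) in some order so that each fired vertex holds a walker at that time.
After firing `F`, the walkers at `v` number `(σ + arr ξ F).count v - F.count v`. -/
inductive Legal (ξ : V → ℕ → V) (σ : Multiset V) : Multiset V → Prop
  | zero : Legal ξ σ 0
  | fire {F : Multiset V} {v : V} (hF : Legal ξ σ F)
      (hv : F.count v < (σ + arr ξ F).count v) : Legal ξ σ (v ::ₘ F)

/-- The walkers can be made to fire `v` arbitrarily many times. -/
def Unbdd (ξ : V → ℕ → V) (σ : Multiset V) (v : V) : Prop :=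
  ∀ k, ∃ F, Legal ξ σ F ∧ k ≤ F.count v

theorem cons_le_of_count_lt {F G : Multiset V} {v : V} (h : F ≤ G) (hv : F.count v < G.count v) :
    v ::ₘ F ≤ G := by
  rw [Multiset.le_iff_count] at h ⊢
  intro w
  rw [Multiset.count_cons]
  have := h w
  split_ifs with hw
  · subst hw; omega
  · omega

theorem count_mono_arr (ξ : V → ℕ → V) (σ : Multiset V) {F G : Multiset V} (h : F ≤ G) (v : V) :
    (σ + arr ξ F).count v ≤ (σ + arr ξ G).count v :=
  Multiset.count_le_of_le _ (add_le_add_right (arr_mono ξ h) σ)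

theorem Legal.le {ξ : V → ℕ → V} {σ F : Multiset V} (h : Legal ξ σ F) : F ≤ σ + arr ξ F := by
  induction h with
  | zero => simp
  | @fire F v hF hv ih =>
    refine cons_le_of_count_lt (ih.trans ?_) (hv.trans_le ?_)
    · exact add_le_add_right (arr_mono ξ (Multiset.le_cons_self _ _)) σ
    · exact count_mono_arr ξ σ (Multiset.le_cons_self _ _) v

theorem Legal.mono {ξ : V → ℕ → V} {σ τ F : Multiset V} (h : Legal ξ σ F) (hστ : σ ≤ τ) :
    Legal ξ τ F := by
  induction h with
  | zero => exact .zero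
  | @fire F v hF hv ih =>
    exact ih.fire (hv.trans_le (Multiset.count_le_of_le _ (add_le_add_left hστ _)))

/-- At most `σ.card` walkers can sit at a vertex, so almost all arrivals at `w` have left again. -/
theorem Legal.count_arr_le {ξ : V → ℕ → V} {σ F : Multiset V} (h : Legal ξ σ F) (w : V) :
    (arr ξ F).count w ≤ σ.card + F.count w := by
  obtain ⟨C, hC⟩ := Multiset.le_iff_exists_add.1 h.le
  have h1 : C.card = σ.card := by
    have := congrArg Multiset.card hC
    simp only [Multiset.card_add, card_arr] at this
    omega
  have h2 := congrArg (Multiset.count w) hC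
  simp only [Multiset.count_add] at h2
  have := Multiset.count_le_card w C
  omega

theorem Unbdd.of_adj {G : SimpleGraph V} {ξ : V → ℕ → V} (hξ : RegularStack G ξ)
    {σ : Multiset V} {v w : V} (hvw : G.Adj v w) (h : Unbdd ξ σ v) : Unbdd ξ σ w := by
  intro k
  have key : ∀ N, ∃ K, N ≤ (arr ξ (Multiset.replicate K v)).count w := by
    intro N
    induction N with
    | zero => exact ⟨0, Nat.zero_le _⟩
    | succ N ih =>
      obtain ⟨K, hK⟩ := ih
      obtain ⟨m, hm, hmK⟩ := (hξ v w hvw).exists_gt K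
      obtain ⟨m, rfl⟩ : ∃ m', m = m' + 1 := ⟨m - 1, by omega⟩
      refine ⟨m + 1, ?_⟩
      have hm' : ξ v (m + 1) = w := hm
      rw [Multiset.replicate_succ, arr_cons, Multiset.count_replicate_self, hm',
        Multiset.count_cons_self]
      have := Multiset.count_le_of_le w
        (arr_mono ξ (Multiset.replicate_mono v (show K ≤ m by omega)))
      omega
  obtain ⟨K, hK⟩ := key (σ.card + k)
  obtain ⟨F, hF, hFK⟩ := h K
  refine ⟨F, hF, ?_⟩
  have h1 := Multiset.count_le_of_le w (arr_mono ξ (Multiset.le_count_iff_replicate_le.1 hFK))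
  have h2 := hF.count_arr_le w
  omega

theorem unbdd_iff {G : SimpleGraph V} (hG : G.Connected) {ξ : V → ℕ → V}
    (hξ : RegularStack G ξ) (σ : Multiset V) (v w : V) : Unbdd ξ σ v ↔ Unbdd ξ σ w := by
  have key : ∀ {a b : V}, G.Walk a b → Unbdd ξ σ a → Unbdd ξ σ b := by
    intro a b p
    induction p with
    | nil => exact id
    | cons hab _ ih => exact fun h => ih (h.of_adj hξ hab)
  exact ⟨key (hG.preconnected v w).some, key (hG.preconnected w v).some⟩

/-! ### Freezing a vertex -/

/-- With the vertex `y` frozen and the walkers emitted by its first `k` firings added to `σ`, more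
than `k` walkers can be brought to `y`. -/
def Returns (ξ : V → ℕ → V) (σ : Multiset V) (y : V) (k : ℕ) : Prop :=
  ∃ β, y ∉ β ∧ Legal ξ (σ + arr ξ (Multiset.replicate k y)) β ∧
    k < (σ + arr ξ (Multiset.replicate k y) + arr ξ β).count y

theorem eq_add_replicate (F : Multiset V) (y : V) :
    F = F.filter (· ≠ y) + Multiset.replicate (F.count y) y := by
  ext w
  rw [Multiset.count_add, Multiset.count_filter, Multiset.count_replicate]
  by_cases h : w = y
  · simp [h]
  · simp [h, Ne.symm h]

theorem arr_split (ξ : V → ℕ → V) (F : Multiset V) (y : V) :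
    arr ξ F = arr ξ (F.filter (· ≠ y)) + arr ξ (Multiset.replicate (F.count y) y) := by
  conv_lhs => rw [eq_add_replicate F y]
  exact arr_add_replicate ξ (by simp) _

theorem Legal.filter {ξ : V → ℕ → V} {σ F : Multiset V} (h : Legal ξ σ F) (y : V) :
    Legal ξ (σ + arr ξ (Multiset.replicate (F.count y) y)) (F.filter (· ≠ y)) := by
  induction h with
  | zero => exact .zero
  | @fire F v hF hv ih =>
    by_cases hvy : v = y
    · subst hvy
      rw [Multiset.filter_cons_of_neg _ (by simp), Multiset.count_cons_self]
      exact ih.mono (add_le_add_right (arr_mono ξ (Multiset.replicate_mono _ (Nat.le_succ _))) _)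
    · rw [Multiset.filter_cons_of_pos (p := (· ≠ y)) _ hvy, Multiset.count_cons_of_ne (Ne.symm hvy)]
      refine ih.fire ?_
      rw [Multiset.count_filter_of_pos (p := (· ≠ y)) hvy, add_assoc,
        add_comm (arr ξ (Multiset.replicate _ _)), ← arr_split]
      exact hv

/-- A legal firing with more than `k` firings of `y` passes through the moment just before the
`(k+1)`-st of them. -/
theorem Legal.exists_stop {ξ : V → ℕ → V} {σ F : Multiset V} (h : Legal ξ σ F) {y : V} {k : ℕ}
    (hk : k < F.count y) :
    ∃ F', Legal ξ σ F' ∧ F'.count y = k ∧ k < (σ + arr ξ F').count y := by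
  induction h with
  | zero => simp at hk
  | @fire F v hF hv ih =>
    by_cases hlt : k < F.count y
    · exact ih hlt
    · rw [Multiset.count_cons] at hk
      split_ifs at hk with hyv
      · subst hyv
        have : F.count y = k := by omega
        exact ⟨F, hF, this, this ▸ hv⟩
      · omega

theorem Unbdd.returns {ξ : V → ℕ → V} {σ : Multiset V} {y : V} (h : Unbdd ξ σ y) (k : ℕ) :
    Returns ξ σ y k := by
  obtain ⟨F, hF, hk⟩ := h (k + 1)
  obtain ⟨F, hF, rfl, hlt⟩ := hF.exists_stop hk
  refine ⟨F.filter (· ≠ y), by simp, hF.filter y, ?_⟩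
  rwa [add_assoc, add_comm (arr ξ (Multiset.replicate _ _)), ← arr_split]

/-- If `y` has been fired `k` times, any legal firing of the system frozen at `y` can be carried
out as well, and so `y` can be fired once more when `Returns ξ σ y k` holds. -/
theorem unbdd_of_returns {ξ : V → ℕ → V} {σ : Multiset V} {y : V}
    (h : ∀ k, Returns ξ σ y k) : Unbdd ξ σ y := by
  suffices H : ∀ k, ∃ F, Legal ξ σ F ∧ F.count y = k from
    fun k => (H k).imp fun F hF => ⟨hF.1, hF.2.ge⟩
  intro k
  induction k with
  | zero => exact ⟨0, .zero, by simp⟩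
  | succ k ih =>
    obtain ⟨F, hF, hFk⟩ := ih
    obtain ⟨β, hyβ, hβ, hlt⟩ := h k
    -- Comparison of a legal `G` with `y` fired `k` times and the frozen system.
    have cmp : ∀ {β G : Multiset V}, y ∉ β → β ≤ G → G.count y = k → ∀ v,
        (σ + arr ξ (Multiset.replicate k y) + arr ξ β).count v ≤ (σ + arr ξ G).count v := by
      intro β G hy hβG hG v
      have hle : β + Multiset.replicate k y ≤ G := by
        rw [Multiset.le_iff_count] at hβG ⊢
        intro w
        have := hβG w
        rw [Multiset.count_add, Multiset.count_replicate]
        split_ifs with hw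
        · subst hw
          rw [Multiset.count_eq_zero_of_notMem hy]
          omega
        · omega
      rw [add_assoc, add_comm (arr ξ (Multiset.replicate _ _)), ← arr_add_replicate ξ hy]
      exact count_mono_arr ξ σ hle v
    have join : ∃ G, Legal ξ σ G ∧ G.count y = k ∧ β ≤ G := by
      clear hlt
      induction hβ with
      | zero => exact ⟨F, hF, hFk, Multiset.zero_le _⟩
      | @fire β v hβ hv ih =>
        simp only [Multiset.mem_cons, not_or] at hyβ
        obtain ⟨G, hG, hGk, hβG⟩ := ih hyβ.2
        by_cases hc : β.count v < G.count v
        · exact ⟨G, hG, hGk, cons_le_of_count_lt hβG hc⟩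
        · refine ⟨v ::ₘ G, hG.fire ?_, ?_, (Multiset.cons_le_cons_iff v).2 hβG⟩
          · have := cmp hyβ.2 hβG hGk v
            omega
          · rw [Multiset.count_cons_of_ne hyβ.1, hGk]
    obtain ⟨G, hG, hGk, hβG⟩ := join
    refine ⟨y ::ₘ G, hG.fire ?_, by rw [Multiset.count_cons_self, hGk]⟩
    have := cmp hyβ hβG hGk y
    omega

/-- Removing one walker lowers by at most one the number of walkers that can be brought to the
frozen vertex `y`: a maximal sub-firing of `β` that is legal without the extra walker leaves
everywhere at most as many walkers as `β` does, and the totals differ by one. -/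
theorem Legal.remove {ξ : V → ℕ → V} {τ β : Multiset V} {y z : V}
    (hβ : Legal ξ (z ::ₘ τ) β) (hy : y ∉ β) :
    ∃ α, y ∉ α ∧ Legal ξ τ α ∧
      (z ::ₘ τ + arr ξ β).count y ≤ (τ + arr ξ α).count y + 1 := by
  have hfin : {α | Legal ξ τ α ∧ α ≤ β}.Finite :=
    (Set.finite_Iic β).subset fun α h => h.2
  obtain ⟨α, ⟨hα, hαβ⟩, hmax⟩ := hfin.exists_maximal ⟨0, .zero, Multiset.zero_le _⟩
  have hyα : y ∉ α := fun h => hy (Multiset.mem_of_le hαβ h)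
  refine ⟨α, hyα, hα, ?_⟩
  have hstuck : ∀ v, α.count v < β.count v → (τ + arr ξ α).count v ≤ α.count v := by
    intro v hv
    by_contra! hlt
    have := hmax ⟨hα.fire hlt, cons_le_of_count_lt hαβ hv⟩ (Multiset.le_cons_self _ _)
    have := Multiset.card_le_card this
    simp at this
  obtain ⟨A, hA⟩ := Multiset.le_iff_exists_add.1 hα.le
  obtain ⟨B, hB⟩ := Multiset.le_iff_exists_add.1 hβ.le
  have hAB : A ≤ B := by
    rw [Multiset.le_iff_count]
    intro v
    have hA' := congrArg (Multiset.count v) hA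
    have hB' := congrArg (Multiset.count v) hB
    have h1 := hstuck v
    have h2 := Multiset.count_le_of_le v hαβ
    have h3 := Multiset.count_le_of_le v (arr_mono ξ hαβ)
    simp only [Multiset.cons_add, Multiset.count_cons, Multiset.count_add] at hA' hB' h1
    omega
  obtain ⟨E, rfl⟩ := Multiset.le_iff_exists_add.1 hAB
  have hE : E.card = 1 := by
    have hA' := congrArg Multiset.card hA
    have hB' := congrArg Multiset.card hB
    simp only [Multiset.cons_add, Multiset.card_cons, Multiset.card_add, card_arr] at hA' hB'
    omega
  have hEy := Multiset.count_le_card y E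
  rw [hA, hB]
  simp only [Multiset.count_add, Multiset.count_eq_zero_of_notMem hy,
    Multiset.count_eq_zero_of_notMem hyα]
  omega

theorem Returns.of_succ {ξ : V → ℕ → V} {σ : Multiset V} {y : V} {k : ℕ}
    (h : Returns ξ σ y (k + 1)) : Returns ξ σ y k := by
  obtain ⟨β, hy, hβ, hlt⟩ := h
  rw [Multiset.replicate_succ, arr_cons, Multiset.add_cons] at hβ hlt
  obtain ⟨α, hyα, hα, hle⟩ := hβ.remove hy
  exact ⟨α, hyα, hα, by omega⟩

theorem Returns.of_le {ξ : V → ℕ → V} {σ : Multiset V} {y : V} {k l : ℕ} (hkl : k ≤ l)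
    (h : Returns ξ σ y l) : Returns ξ σ y k := by
  induction l, hkl using Nat.le_induction with
  | base => exact h
  | succ l _ ih => exact ih h.of_succ

theorem legal_pop_iff {ξ : V → ℕ → V} {σ β : Multiset V} {y : V} (hy : y ∉ β) :
    Legal (pop y ξ) σ β ↔ Legal ξ σ β := by
  constructor
  · intro h
    induction h with
    | zero => exact .zero
    | @fire F v hF hv ih =>
      simp only [Multiset.mem_cons, not_or] at hy
      rw [arr_pop_of_notMem ξ hy.2] at hv
      exact (ih hy.2).fire hv
  · intro h
    induction h with
    | zero => exact .zero
    | @fire F v hF hv ih =>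
      simp only [Multiset.mem_cons, not_or] at hy
      rw [← arr_pop_of_notMem ξ hy.2] at hv
      exact (ih hy.2).fire hv

theorem returns_pop_iff {ξ : V → ℕ → V} {σ : Multiset V} {y : V} {k : ℕ} :
    Returns (pop y ξ) σ y k ↔
      ∃ β, y ∉ β ∧ Legal ξ (σ + arr (pop y ξ) (Multiset.replicate k y)) β ∧
        k < (σ + arr (pop y ξ) (Multiset.replicate k y) + arr ξ β).count y := by
  refine exists_congr fun β => and_congr_right fun hy => ?_
  rw [legal_pop_iff hy, arr_pop_of_notMem ξ hy]

/-- Popping `y` removes the walker sent to `ξ y 1` from the emissions of `y`. That walker can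
contribute at most one return; conversely, as the card `ξ y 1` reappears infinitely often, the
emissions of the two stacks agree as multisets for infinitely many `k`. -/
theorem unbdd_pop_iff {ξ : V → ℕ → V} {σ : Multiset V} {y : V}
    (hinf : {m | ξ y m = ξ y 1}.Infinite) : Unbdd (pop y ξ) σ y ↔ Unbdd ξ σ y := by
  constructor
  · intro h
    refine unbdd_of_returns fun k => ?_
    obtain ⟨m, hm, hkm⟩ := hinf.exists_gt k
    obtain ⟨m, rfl⟩ : ∃ m', m = m' + 1 := ⟨m - 1, by omega⟩
    have hm' : ξ y (m + 1) = ξ y 1 := hm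
    refine Returns.of_le (show k ≤ m by omega) ?_
    have heq : arr (pop y ξ) (Multiset.replicate m y) = arr ξ (Multiset.replicate m y) := by
      have h1 := arr_cons_pop ξ y (Multiset.replicate m y)
      rw [arr_cons, Multiset.count_replicate_self, hm'] at h1
      exact ((Multiset.cons_inj_right _).1 h1).symm
    have := returns_pop_iff.1 (h.returns m)
    rwa [heq] at this
  · intro h
    refine unbdd_of_returns fun k => returns_pop_iff.2 ?_
    obtain ⟨β, hy, hβ, hlt⟩ := h.returns (k + 1)
    rw [Multiset.replicate_succ, arr_cons_pop, Multiset.add_cons] at hβ hlt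
    obtain ⟨α, hyα, hα, hle⟩ := hβ.remove hy
    exact ⟨α, hyα, hα, by omega⟩

/-! ### Popping the stack and relocating the walkers -/

theorem isStack_pop {G : SimpleGraph V} {ξ : V → ℕ → V} (h : IsStack G ξ) (y : V) :
    IsStack G (pop y ξ) := by
  intro x m
  rw [pop_apply]
  exact h _ _

theorem regularStack_pop {G : SimpleGraph V} {ξ : V → ℕ → V} (h : RegularStack G ξ) (y : V) :
    RegularStack G (pop y ξ) := by
  intro a b hab
  rw [Set.infinite_iff_exists_gt]
  intro N
  obtain ⟨m, hm, hN⟩ := (h a b hab).exists_gt (N + 1)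
  have hm' : ξ a m = b := hm
  refine ⟨m - if a = y then 1 else 0, ?_, ?_⟩
  · rw [Set.mem_ofPred_eq, pop_apply, Nat.sub_add_cancel, hm']
    split_ifs <;> omega
  · split_ifs <;> omega

/-- Every vertex can be fired arbitrarily often. -/
def AllUnbdd (ξ : V → ℕ → V) (σ : Multiset V) : Prop := ∀ v, Unbdd ξ σ v

theorem allUnbdd_pop {G : SimpleGraph V} (hG : G.Connected) {ξ : V → ℕ → V}
    (hs : IsStack G ξ) (hr : RegularStack G ξ) (σ : Multiset V) (y : V) :
    AllUnbdd (pop y ξ) σ ↔ AllUnbdd ξ σ := by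
  have h := unbdd_pop_iff (σ := σ) (hr y (ξ y 1) (hs y 1))
  constructor
  · exact fun H v => (unbdd_iff hG hr σ y v).1 (h.1 (H y))
  · exact fun H v => (unbdd_iff hG (regularStack_pop hr y) σ y v).1 (h.2 (H y))

theorem allUnbdd_foldl {G : SimpleGraph V} (hG : G.Connected) (σ : Multiset V) (l : List V) :
    ∀ {ξ : V → ℕ → V}, IsStack G ξ → RegularStack G ξ →
      (AllUnbdd (l.foldl (fun η x => pop x η) ξ) σ ↔ AllUnbdd ξ σ) := by
  induction l with
  | nil => exact fun _ _ => Iff.rfl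
  | cons y l ih =>
    intro ξ hs hr
    exact (ih (isStack_pop hs y) (regularStack_pop hr y)).trans (allUnbdd_pop hG hs hr σ y)

theorem Legal.cons_of_pop {ξ : V → ℕ → V} {σ F : Multiset V} {v : V}
    (h : Legal (pop v ξ) (ξ v 1 ::ₘ σ) F) : Legal ξ (v ::ₘ σ) (v ::ₘ F) := by
  induction h with
  | zero => exact Legal.zero.fire (by simp [arr_zero])
  | @fire F w hF hw ih =>
    rw [Multiset.cons_swap]
    refine ih.fire ?_
    rw [arr_cons_pop]
    simp only [Multiset.cons_add, Multiset.add_cons, Multiset.count_cons,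
      Multiset.count_add] at hw ⊢
    omega

theorem Legal.exists_pop {ξ : V → ℕ → V} {σ F : Multiset V} {v : V}
    (h : Legal ξ (v ::ₘ σ) F) : ∃ F', Legal (pop v ξ) (ξ v 1 ::ₘ σ) F' ∧ F ≤ v ::ₘ F' := by
  induction h with
  | zero => exact ⟨0, .zero, Multiset.zero_le _⟩
  | @fire F w hF hw ih =>
    obtain ⟨F', hF', hle⟩ := ih
    by_cases hc : F.count w < (v ::ₘ F').count w
    · exact ⟨F', hF', cons_le_of_count_lt hle hc⟩
    · refine ⟨w ::ₘ F', hF'.fire ?_, ?_⟩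
      · have := hw.trans_le (count_mono_arr ξ (v ::ₘ σ) hle w)
        rw [arr_cons_pop] at this
        simp only [Multiset.cons_add, Multiset.add_cons, Multiset.count_cons,
          Multiset.count_add] at this hc ⊢
        omega
      · rw [Multiset.cons_swap]
        exact (Multiset.cons_le_cons_iff w).2 hle

/-- One legal step of a walker from `v` changes the locations and the stack, but not which
vertices can be fired arbitrarily often. -/
theorem allUnbdd_fire (ξ : V → ℕ → V) (σ : Multiset V) (v : V) :
    AllUnbdd (pop v ξ) (ξ v 1 ::ₘ σ) ↔ AllUnbdd ξ (v ::ₘ σ) := by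
  constructor
  · intro H w k
    obtain ⟨F, hF, hk⟩ := H w k
    exact ⟨_, hF.cons_of_pop, hk.trans (Multiset.count_le_count_cons _ _ _)⟩
  · intro H w k
    obtain ⟨F, hF, hk⟩ := H w (k + 1)
    obtain ⟨F', hF', hle⟩ := hF.exists_pop
    refine ⟨F', hF', ?_⟩
    have := Multiset.count_le_of_le w hle
    rw [Multiset.count_cons] at this
    split_ifs at this <;> omega

theorem foldl_replicate_pop (v : V) (j m : ℕ) : ∀ ξ : V → ℕ → V,
    (List.replicate j v).foldl (fun η x => pop x η) ξ v m = ξ v (m + j) := by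
  induction j with
  | zero => simp
  | succ j ih =>
    intro ξ
    rw [List.replicate_succ, List.foldl_cons, ih, pop_apply, if_pos rfl]
    congr 1

/-- A walker at `v` may be moved to a neighbor `w`: pop `v` until its next card is `w`, let the
walker take that step, and undo the popping. -/
theorem allUnbdd_adj {G : SimpleGraph V} (hG : G.Connected) {ξ : V → ℕ → V}
    (hs : IsStack G ξ) (hr : RegularStack G ξ) (σ : Multiset V) {v w : V} (h : G.Adj v w) :
    AllUnbdd ξ (v ::ₘ σ) ↔ AllUnbdd ξ (w ::ₘ σ) := by
  obtain ⟨m, hm, hpos⟩ := (hr v w h).exists_gt 0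
  obtain ⟨j, rfl⟩ : ∃ j, m = 1 + j := ⟨m - 1, by omega⟩
  have hm' : ξ v (1 + j) = w := hm
  rw [← allUnbdd_foldl hG (v ::ₘ σ) (List.replicate j v) hs hr, ← allUnbdd_fire,
    foldl_replicate_pop, hm',
    ← allUnbdd_foldl hG (w ::ₘ σ) (List.replicate j v ++ [v]) hs hr, List.foldl_append]
  rfl

theorem allUnbdd_relocate {G : SimpleGraph V} (hG : G.Connected) {ξ : V → ℕ → V}
    (hs : IsStack G ξ) (hr : RegularStack G ξ) (σ : Multiset V) (v w : V) :
    AllUnbdd ξ (v ::ₘ σ) ↔ AllUnbdd ξ (w ::ₘ σ) := by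
  induction (hG.preconnected v w).some with
  | nil => exact Iff.rfl
  | cons hab _ ih => exact (allUnbdd_adj hG hs hr σ hab).trans ih

theorem allUnbdd_card {G : SimpleGraph V} (hG : G.Connected) {ξ : V → ℕ → V}
    (hs : IsStack G ξ) (hr : RegularStack G ξ) (σ : Multiset V) :
    ∀ {τ ρ : Multiset V}, σ.card = τ.card → (AllUnbdd ξ (σ + ρ) ↔ AllUnbdd ξ (τ + ρ)) := by
  induction σ using Multiset.induction_on with
  | empty =>
    intro τ ρ h
    rw [Multiset.card_eq_zero.1 h.symm]
  | cons a σ ih =>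
    intro τ ρ h
    rw [Multiset.card_cons] at h
    obtain ⟨b, hb⟩ := Multiset.card_pos_iff_exists_mem.1 (show 0 < τ.card by omega)
    obtain ⟨τ, rfl⟩ := Multiset.exists_cons_of_mem hb
    rw [Multiset.card_cons] at h
    rw [Multiset.cons_add, allUnbdd_relocate hG hs hr _ a b, ← Multiset.add_cons,
      ih (show σ.card = τ.card by omega), Multiset.add_cons, Multiset.cons_add]

/-! ### The cyclic walk as a legal firing -/

section Cyclic

variable (n : ℕ) (hn : 0 < n) (x : Fin n → V) (ξ : V → ℕ → V)

/-- The location of the active walker at step `t + 1`, i.e. the vertex popped at that step. -/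
noncomputable def active (t : ℕ) : V := (cyclicWalk n hn x ξ t).1 ⟨t % n, Nat.mod_lt t hn⟩

/-- The multiset of vertices popped during the first `t` steps. -/
noncomputable def fired : ℕ → Multiset V
  | 0 => 0
  | t + 1 => active n hn x ξ t ::ₘ fired t

/-- The multiset of the locations of the walkers. -/
def locs {n : ℕ} (x : Fin n → V) : Multiset V := (Finset.univ : Finset (Fin n)).val.map x

theorem mem_locs {n : ℕ} {x : Fin n → V} {v : V} : v ∈ locs x ↔ ∃ i, x i = v := by
  simp [locs]

theorem locs_update {n : ℕ} (x : Fin n → V) (i : Fin n) (a : V) :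
    x i ::ₘ locs (Function.update x i a) = a ::ₘ locs x := by
  have h : (Finset.univ : Finset (Fin n)).val = i ::ₘ (Finset.univ.erase i).val := by
    rw [Finset.erase_val, Multiset.cons_erase (by simp)]
  rw [locs, locs, h, Multiset.map_cons, Multiset.map_cons, Multiset.cons_swap,
    Function.update_self]
  congr 2
  refine Multiset.map_congr rfl fun j hj => ?_
  rw [Function.update_of_ne (Finset.ne_of_mem_erase (Finset.mem_def.2 hj))]

theorem cyclicWalk_snd (t : ℕ) (v : V) (m : ℕ) :
    (cyclicWalk n hn x ξ t).2 v m = ξ v (m + (fired n hn x ξ t).count v) := by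
  induction t generalizing m with
  | zero => simp [cyclicWalk, fired]
  | succ t ih =>
    rw [fired, Multiset.count_cons]
    change pop (active n hn x ξ t) (cyclicWalk n hn x ξ t).2 v m = _
    rw [pop_apply, ih]
    congr 1
    omega

/-- Conservation of walkers. -/
theorem locs_add_fired (t : ℕ) :
    locs (cyclicWalk n hn x ξ t).1 + fired n hn x ξ t = locs x + arr ξ (fired n hn x ξ t) := by
  induction t with
  | zero => simp [cyclicWalk, fired, arr_zero]
  | succ t ih =>
    have h := locs_update (cyclicWalk n hn x ξ t).1 ⟨t % n, Nat.mod_lt t hn⟩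
      (pop (active n hn x ξ t) (cyclicWalk n hn x ξ t).2 (active n hn x ξ t) 0)
    change active n hn x ξ t ::ₘ locs (cyclicWalk n hn x ξ (t + 1)).1 = _ at h
    rw [fired, arr_cons, Multiset.add_cons, ← Multiset.cons_add, h, Multiset.cons_add, ih,
      Multiset.add_cons, pop_apply, if_pos rfl, cyclicWalk_snd]
    congr 2
    omega

theorem legal_fired (t : ℕ) : Legal ξ (locs x) (fired n hn x ξ t) := by
  induction t with
  | zero => exact .zero
  | succ t ih =>
    refine ih.fire ?_
    rw [← locs_add_fired, Multiset.count_add]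
    have : 0 < (locs (cyclicWalk n hn x ξ t).1).count (active n hn x ξ t) :=
      Multiset.count_pos.2 (mem_locs.2 ⟨_, rfl⟩)
    omega

theorem fired_mono : Monotone (fired n hn x ξ) :=
  monotone_nat_of_le_succ fun _ => Multiset.le_cons_self _ _

/-- Fairness of the cyclic order: an occupied vertex is eventually popped. -/
theorem exists_active {t : ℕ} {v : V} (h : ∃ i, (cyclicWalk n hn x ξ t).1 i = v) :
    ∃ s, t ≤ s ∧ active n hn x ξ s = v := by
  obtain ⟨i, hi⟩ := h
  have hex : ∃ d, (t + d) % n = i := by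
    refine ⟨n * t + i - t, ?_⟩
    have : t ≤ n * t := Nat.le_mul_of_pos_left t hn
    rw [show t + (n * t + i - t) = i + n * t by omega, Nat.add_mul_mod_self_left,
      Nat.mod_eq_of_lt i.2]
  -- Walker `i` stays put until its first turn after time `t`.
  have hstay : ∀ d, d ≤ Nat.find hex → (cyclicWalk n hn x ξ (t + d)).1 i = v := by
    intro d
    induction d with
    | zero => exact fun _ => hi
    | succ d ih =>
      intro hd
      have hne : i ≠ ⟨(t + d) % n, Nat.mod_lt _ hn⟩ :=
        fun h => Nat.find_min hex (show d < Nat.find hex by omega) (congrArg Fin.val h).symm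
      rw [← ih (by omega)]
      exact Function.update_of_ne hne _ _
  refine ⟨t + Nat.find hex, Nat.le_add_right _ _, ?_⟩
  rw [← hstay _ le_rfl, active]
  exact congrArg _ (Fin.ext (Nat.find_spec hex))

/-- Least action principle: the cyclic walk eventually performs every legal firing. -/
theorem Legal.le_fired {n : ℕ} (hn : 0 < n) {x : Fin n → V} {ξ : V → ℕ → V} {F : Multiset V}
    (h : Legal ξ (locs x) F) : ∃ t, F ≤ fired n hn x ξ t := by
  induction h with
  | zero => exact ⟨0, Multiset.zero_le _⟩
  | @fire F v hF hv ih =>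
    obtain ⟨t, ht⟩ := ih
    by_cases hc : F.count v < (fired n hn x ξ t).count v
    · exact ⟨t, cons_le_of_count_lt ht hc⟩
    · have h1 := hv.trans_le (count_mono_arr ξ (locs x) ht v)
      rw [← locs_add_fired, Multiset.count_add] at h1
      have hpos : 0 < (locs (cyclicWalk n hn x ξ t).1).count v := by
        have := Multiset.count_le_of_le v ht
        omega
      obtain ⟨s, hts, hs⟩ := exists_active n hn x ξ (mem_locs.1 (Multiset.count_pos.1 hpos))
      refine ⟨s + 1, ?_⟩
      rw [fired, hs]
      exact (Multiset.cons_le_cons_iff v).2 (ht.trans (fired_mono n hn x ξ hts))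

theorem recurrent_iff : Recurrent n (cyclicWalk n hn x ξ) ↔ AllUnbdd ξ (locs x) := by
  refine forall_congr' fun v => ⟨fun h => ?_, fun h => ?_⟩
  · suffices H : ∀ k, ∃ t, k ≤ (fired n hn x ξ t).count v from
      fun k => (H k).elim fun t ht => ⟨_, legal_fired n hn x ξ t, ht⟩
    intro k
    induction k with
    | zero => exact ⟨0, Nat.zero_le _⟩
    | succ k ih =>
      obtain ⟨t, ht⟩ := ih
      obtain ⟨t', hv, htt'⟩ := h.exists_gt t
      obtain ⟨s, hs, hsv⟩ := exists_active n hn x ξ hv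
      refine ⟨s + 1, ?_⟩
      rw [fired, hsv, Multiset.count_cons_self]
      have := Multiset.count_le_of_le v (fired_mono n hn x ξ (htt'.le.trans hs))
      omega
  · rw [Set.infinite_iff_exists_gt]
    intro N
    obtain ⟨F, hF, hk⟩ := h ((fired n hn x ξ (N + 1)).count v + 1)
    obtain ⟨t, ht⟩ := hF.le_fired hn
    have hlt := Multiset.count_le_of_le v ht
    by_contra! hno
    have hconst : ∀ d, (fired n hn x ξ (N + 1 + d)).count v = (fired n hn x ξ (N + 1)).count v := by
      intro d
      induction d with
      | zero => rfl
      | succ d ih =>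
        rw [← add_assoc, fired, Multiset.count_cons_of_ne, ih]
        intro hv
        have := hno (N + 1 + d) ⟨_, hv.symm⟩
        omega
    have h1 := Multiset.count_le_of_le v (fired_mono n hn x ξ (Nat.le_add_left t (N + 1)))
    rw [hconst t] at h1
    omega

end Cyclic

end Abelian

end StackWalk

/-- **Theorem (recurrence is invariant under popping and relocation).**
Let `x0, x0' ∈ V^n` and let `ξ, ξ'` be regular stacks such that `ξ'` is obtained from
`ξ` by finitely many popping operations.  Then the (cyclic turn order) stack walk with
initialization `(x0, ξ)` is recurrent if and only if the stack walk with initialization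
`(x0', ξ')` is recurrent. -/
theorem stack_walk_recurrent_iff_of_popped
    {V : Type*} (G : SimpleGraph V) (hG : G.Connected) (hGlf : G.LocallyFinite)
    (n : ℕ) (hn : 0 < n) (x0 x0' : Fin n → V) (ξ ξ' : V → ℕ → V)
    (hξ : StackWalk.IsStack G ξ) (hξreg : StackWalk.RegularStack G ξ)
    (hξ'reg : StackWalk.RegularStack G ξ')
    (hpop : StackWalk.PoppedFrom ξ ξ') :
    StackWalk.Recurrent n (StackWalk.cyclicWalk n hn x0 ξ) ↔
      StackWalk.Recurrent n (StackWalk.cyclicWalk n hn x0' ξ') := by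
  obtain ⟨l, rfl⟩ := hpop
  rw [StackWalk.recurrent_iff, StackWalk.recurrent_iff,
    StackWalk.allUnbdd_foldl hG _ l hξ hξreg]
  have h := StackWalk.allUnbdd_card hG hξ hξreg (StackWalk.locs x0) (τ := StackWalk.locs x0')
    (ρ := 0) (by simp [StackWalk.locs])
  simpa using h
end

section
/- Let ρ and ρ' be rotor configurations on G that differ at only finitely many vertices. Then for the n-walker random walk with local memory, p_rec(ρ) = p_rec(ρ'). -/
/-! The walk is driven by independent instructions `ω (v, k, a)` with law `mech v a`, where
`ω (v, k, a)` tells the walker making the `k`-th exit from `v` (counted from `0`) where to go if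
the rotor at `v` points to `a`. Different steps read different instructions, so the resulting
trajectory has the law of the walk (`isLaw_map_moves`), and that law is unique (`isLaw_unique`).
It remains to compare the recurrence probabilities `recProb` of the driven walks.

Fix `ω` and a rotor configuration `ρ`. The rotors seen at `v` form a fixed sequence `stack ρ ω v`,
whatever the order in which the walkers move. By the maximum principle, almost surely every
neighbor of every vertex `v` occurs infinitely often in it (`ae_good`), so on a connected graph
either all vertices are visited infinitely often or none is. For such stacks recurrence does not
depend on the starting locations (`not_recurrent_of_transient`). Suppose that one process is
recurrent and another one using the same stacks is transient. Run the
recurrent process until it has used, at each starting point of the transient one, more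
instructions than the latter ever uses there, and halt it with a walker at one of these points.
Then run the transient process until its walkers have left the finite set of vertices exited by
the recurrent one. Let `A` be the set of vertices at which the halted recurrent process has used
some instruction and at least as many as the transient one. The walkers of the transient process
all start in `A` and end outside of it, and counting walkers in `A` (`Reach.cut`) shows that
no walker of the recurrent process can be in `A`, a contradiction. The same comparison shows that carrying out the first
instruction at one vertex `v` in advance does not affect recurrence (`recurrent_shift_iff`).

Conditioning on that instruction gives
`p_rec(ρ) = ∑ c, p_v(ρ v, c) p_rec(ρ[v ↦ c])` (`recProb_harmonic`). Hence `p_rec` is a harmonic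
function of the rotor at `v`, and it is constant in this rotor because the local mechanism is
irreducible on a finite set (`eq_of_subharmonic`). Configurations with finitely many differences
are then compared by changing one rotor at a time. -/

open MeasureTheory Filter
open scoped ENNReal

namespace RWLM

variable {V : Type*}

/-- The state of an `n`-walker random walk with local memory:
the positions of the `n` walkers together with the current rotor configuration. -/
abbrev State (V : Type*) (n : ℕ) := (Fin n → V) × (V → V)

open Classical in
/-- The `m`-step transition probabilities of the local mechanism at `x`. -/
noncomputable def mechPow (mech : V → V → V → ℝ≥0∞) (x : V) : ℕ → V → V → ℝ≥0∞
  | 0, a, b => if a = b then 1 else 0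
  | m + 1, a, b => ∑' c, mech x a c * mechPow mech x m c b

/-- `mech` is a family of local mechanisms for the graph `G`: `mech x a b` is the
transition probability `p_x(a, b)` of the local Markov chain at `x`. Each row is a
probability distribution supported on the neighbors of `x`, and the chain is
irreducible on the (finite) set of neighbors of `x`. -/
structure IsMechanism (G : SimpleGraph V) (mech : V → V → V → ℝ≥0∞) : Prop where
  support : ∀ x a b, mech x a b ≠ 0 → G.Adj x b
  total : ∀ x a, ∑' b, mech x a b = 1
  irreducible : ∀ x a b, G.Adj x a → G.Adj x b → ∃ m, 0 < mechPow mech x m a b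

/-- `ρ` is a rotor configuration of `G`: `ρ x` is a neighbor of `x` for every `x`. -/
def IsRotor (G : SimpleGraph V) (ρ : V → V) : Prop := ∀ x, G.Adj x (ρ x)

/-- The walker that is active at the `(t+1)`-st step of the cyclic turn order. -/
def active (n : ℕ) (hn : 0 < n) (t : ℕ) : Fin n := ⟨t % n, Nat.mod_lt t hn⟩

open Classical in
/-- Update the state when walker `i` moves to `y`: the rotor at the vertex the walker
leaves is set to `y`, and walker `i` moves to `y`. -/
noncomputable def apply' (n : ℕ) (s : State V n) (i : Fin n) (y : V) : State V n :=
  (Function.update s.1 i y, Function.update s.2 (s.1 i) y)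

/-- The one-step transition probability of the RWLM: from state `s`, the active walker
`i` samples its next location `y` from the row of the local mechanism of its current
position indexed by the current rotor there. -/
def weight (mech : V → V → V → ℝ≥0∞) (n : ℕ) (s : State V n) (i : Fin n) (y : V) :
    ℝ≥0∞ :=
  mech (s.1 i) (s.2 (s.1 i)) y

/-- The deterministic reconstruction of the state of the `n`-walker RWLM (with initial
walker locations `x0` and initial rotor configuration `ρ`) from a trajectory. -/
noncomputable def seq (n : ℕ) (hn : 0 < n) (x0 : Fin n → V) (ρ : V → V) (y : ℕ → V) :
    ℕ → State V n
  | 0 => (x0, ρ)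
  | t + 1 => apply' n (seq n hn x0 ρ y t) (active n hn t) (y t)

/-- `μ` is the law of the `n`-walker RWLM with local mechanisms `mech`, initial walker
locations `x0` and initial rotor configuration `ρ`: the finite-dimensional
distributions are products of one-step transition probabilities. -/
def IsLaw [MeasurableSpace V] (mech : V → V → V → ℝ≥0∞) (n : ℕ) (hn : 0 < n)
    (x0 : Fin n → V) (ρ : V → V) (μ : Measure (ℕ → V)) : Prop :=
  ∀ (t : ℕ) (c : ℕ → V),
    μ {y : ℕ → V | ∀ s < t, y s = c s} =
      ∏ s ∈ Finset.range t, weight mech n (seq n hn x0 ρ c s) (active n hn s) (c s)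

/-- A trajectory is recurrent if every vertex is visited infinitely many times. -/
def Recurrent (n : ℕ) (hn : 0 < n) (x0 : Fin n → V) (ρ : V → V) (y : ℕ → V) : Prop :=
  ∀ v : V, {t : ℕ | ∃ i, (seq n hn x0 ρ y t).1 i = v}.Infinite

end RWLM

namespace RWLM

/-! ### Toppling processes driven by stacks of instructions -/

open Classical in
/-- `Reach ξ x p U`: starting with walkers at `x`, some sequence of moves, in any order of the
walkers, brings the walkers to `p` and makes `U v` walkers leave each vertex `v`; the `k`-th
exit from `v`, with `k` counted from `0`, goes to `ξ v (k + 1)`. -/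
inductive Reach {V : Type*} {n : ℕ} (ξ : V → ℕ → V) (x : Fin n → V) :
    (Fin n → V) → (V → ℕ) → Prop
  | start : Reach ξ x x (fun _ => 0)
  | step (p : Fin n → V) (U : V → ℕ) (i : Fin n) (h : Reach ξ x p U) :
      Reach ξ x (Function.update p i (ξ (p i) (U (p i) + 1)))
        (Function.update U (p i) (U (p i) + 1))

section Paths

variable {V : Type*} {n : ℕ}

theorem Reach.finite {ξ : V → ℕ → V} {x p : Fin n → V} {U : V → ℕ} (h : Reach ξ x p U) :
    {v | U v ≠ 0}.Finite := by
  classical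
  induction h with
  | start => simp
  | step p U i h ih =>
    refine (ih.insert (p i)).subset ?_
    intro v hv
    by_cases hvi : v = p i
    · simp [hvi]
    · simp only [Set.mem_ofPred_eq] at hv
      rw [Function.update_of_ne hvi] at hv
      exact Set.mem_insert_of_mem _ hv

/-- Conservation of mass: a move from `v` to `w` changes the number of walkers, weighted by
`a`, by `a w - a v`. -/
theorem Reach.balance {ξ : V → ℕ → V} {x p : Fin n → V} {U : V → ℕ} (h : Reach ξ x p U)
    (a : V → ℤ) (F : Finset V) (hF : ∀ v, U v ≠ 0 → v ∈ F) :
    ∑ i, a (p i) = ∑ i, a (x i) +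
      ∑ v ∈ F, ∑ k ∈ Finset.range (U v), (a (ξ v (k + 1)) - a v) := by
  classical
  induction h with
  | start => simp
  | step p U i h ih =>
    have hpF : p i ∈ F := hF (p i) (by simp)
    have ih' := ih (by
      intro v hv
      by_cases hvi : v = p i
      · rwa [hvi]
      · apply hF
        convert hv using 1
        exact Function.update_of_ne hvi _ _)
    have e1 : ∑ j, a (Function.update p i (ξ (p i) (U (p i) + 1)) j)
        = ∑ j, a (p j) + (a (ξ (p i) (U (p i) + 1)) - a (p i)) := by
      rw [← Finset.add_sum_erase _ _ (Finset.mem_univ i),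
        ← Finset.add_sum_erase (a := i) _ (fun j => a (p j)) (Finset.mem_univ i),
        Finset.sum_congr rfl (g := fun j => a (p j))]
      · rw [Function.update_self]; ring
      · intro j hj
        rw [Function.update_of_ne (Finset.ne_of_mem_erase hj)]
    have e2 : ∑ v ∈ F, ∑ k ∈ Finset.range (Function.update U (p i) (U (p i) + 1) v),
          (a (ξ v (k + 1)) - a v)
        = ∑ v ∈ F, ∑ k ∈ Finset.range (U v), (a (ξ v (k + 1)) - a v)
          + (a (ξ (p i) (U (p i) + 1)) - a (p i)) := by
      rw [← Finset.add_sum_erase _ _ hpF,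
        ← Finset.add_sum_erase (a := p i) F
          (fun v => ∑ k ∈ Finset.range (U v), (a (ξ v (k + 1)) - a v)) hpF,
        Finset.sum_congr rfl
          (g := fun v => ∑ k ∈ Finset.range (U v), (a (ξ v (k + 1)) - a v))]
      · simp [Finset.sum_range_succ]; ring
      · intro v hv
        rw [Function.update_of_ne (Finset.ne_of_mem_erase hv)]
    exact e1.trans (by rw [ih', add_assoc, ← e2])

/-- The cut inequality. Two processes use the same stacks, and `A` is the set of vertices at
which the first process has used some instruction and at least as many as the second. Every exit
from `A` by the second process is also made by the first, and every entrance to `A` by the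
first process is also made by the second. So if all walkers of the second process start in `A`
and end at vertices never exited by the first one, then no walker of the first process is in `A`,
and in particular none is at a starting point of the second process. -/
theorem Reach.cut {ξ : V → ℕ → V} {x y p q : Fin n → V} {U W : V → ℕ}
    (hU : Reach ξ x p U) (hW : Reach ξ y q W)
    (hy : ∀ i, 0 < U (y i) ∧ W (y i) ≤ U (y i)) (hq : ∀ j, U (q j) = 0)
    (i j : Fin n) (hij : p i = y j) : False := by
  classical
  set a : V → ℤ := fun v => if 0 < U v ∧ W v ≤ U v then 1 else 0 with ha
  have a0 : ∀ v, 0 ≤ a v := fun v => by simp only [ha]; split_ifs <;> simp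
  have a1 : ∀ v, a v ≤ 1 := fun v => by simp only [ha]; split_ifs <;> simp
  set F : Finset V := hU.finite.toFinset ∪ hW.finite.toFinset
  have b1 := hU.balance a F (by intro v hv; simp [F, hv])
  have b2 := hW.balance a F (by intro v hv; simp [F, hv])
  have e1 : ∑ i, a (y i) = n := by
    rw [Finset.sum_congr rfl (g := fun _ => (1 : ℤ))]
    · simp
    · intro i _
      simp [ha, hy i]
  have e2 : ∑ i, a (q i) = 0 := by
    apply Finset.sum_eq_zero
    intro i _
    simp [ha, hq i]
  have e3 : ∑ i, a (x i) ≤ n := by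
    calc ∑ i, a (x i) ≤ ∑ _i : Fin n, (1 : ℤ) := Finset.sum_le_sum fun i _ => a1 _
      _ = n := by simp
  have e4 : 1 ≤ ∑ i, a (p i) := by
    calc (1 : ℤ) = a (p i) := by simp [ha, hij, hy j]
      _ ≤ _ := Finset.single_le_sum (f := fun i => a (p i)) (fun i _ => a0 _) (Finset.mem_univ i)
  have e5 : ∑ v ∈ F, ∑ k ∈ Finset.range (U v), (a (ξ v (k + 1)) - a v)
      ≤ ∑ v ∈ F, ∑ k ∈ Finset.range (W v), (a (ξ v (k + 1)) - a v) := by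
    apply Finset.sum_le_sum
    intro v _
    by_cases hv : 0 < U v ∧ W v ≤ U v
    · have hav : a v = 1 := by simp [ha, hv]
      rw [← Finset.sum_range_add_sum_Ico _ hv.2]
      have : ∑ k ∈ Finset.Ico (W v) (U v), (a (ξ v (k + 1)) - a v) ≤ 0 :=
        Finset.sum_nonpos fun k _ => by rw [hav]; linarith [a1 (ξ v (k + 1))]
      linarith
    · have hav : a v = 0 := by simp [ha, hv]
      have hle : U v ≤ W v := by
        by_contra hlt
        exact hv ⟨by omega, by omega⟩
      rw [← Finset.sum_range_add_sum_Ico _ hle]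
      have : 0 ≤ ∑ k ∈ Finset.Ico (U v) (W v), (a (ξ v (k + 1)) - a v) :=
        Finset.sum_nonneg fun k _ => by rw [hav]; linarith [a0 (ξ v (k + 1))]
      linarith
  linarith

/-- A process using the stacks obtained from `ξ` by discarding the first instruction at `x i`
becomes a process using `ξ` if that instruction is executed first by walker `i`. -/
theorem Reach.shift {ξ ξ' : V → ℕ → V} {x y p : Fin n → V} {U : V → ℕ} {v : V} (i : Fin n)
    (hv : x i = v) (hy : ∀ j, j ≠ i → y j = x j) (hyi : y i = ξ v 1)
    (hξ : ∀ k, ξ' v k = ξ v (k + 1)) (hξ' : ∀ w, w ≠ v → ξ' w = ξ w)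
    (h : Reach ξ' y p U) : ∃ W : V → ℕ, Reach ξ x p W ∧ W v = U v + 1 ∧
      ∀ w, w ≠ v → W w = U w := by
  classical
  induction h with
  | start =>
    refine ⟨Function.update (fun _ => 0) v 1, ?_, ?_⟩
    · have := Reach.step (ξ := ξ) x _ i (Reach.start (ξ := ξ) (x := x))
      rw [hv] at this
      convert this using 1
      funext j
      by_cases hj : j = i
      · subst hj; simp [hyi]
      · simp [hj, hy]
    · exact ⟨by simp, fun w hw => by simp [hw]⟩
  | step p U j h ih =>
    obtain ⟨W, hW, h1, h2⟩ := ih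
    have := Reach.step p W j hW
    have key : ξ (p j) (W (p j) + 1) = ξ' (p j) (U (p j) + 1) := by
      by_cases hj : p j = v
      · rw [hj, h1, hξ]
      · rw [h2 _ hj, hξ' _ hj]
    refine ⟨Function.update W (p j) (W (p j) + 1), ?_, ?_, ?_⟩
    · rw [← key]; convert this
    · by_cases hj : p j = v
      · subst hj; simp [h1]
      · have hj' : v ≠ p j := fun h => hj h.symm
        rw [Function.update_of_ne hj', Function.update_of_ne hj', h1]
    · intro w hw
      by_cases hj : w = p j
      · subst hj; simp [h2 _ hw]
      · rw [Function.update_of_ne hj, Function.update_of_ne hj, h2 _ hw]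

/-- Of two processes using the same stacks, it is impossible that one visits every vertex
infinitely often while the other one visits every vertex only finitely often. -/
theorem not_recurrent_of_transient {ξ : V → ℕ → V} {x y : Fin n → V} (hn : 0 < n)
    {p q : ℕ → Fin n → V} {U W : ℕ → V → ℕ}
    (hU : ∀ t, Reach ξ x (p t) (U t)) (hW : ∀ t, Reach ξ y (q t) (W t))
    (hUm : Monotone U) (hUb : ∀ v K, ∃ t, K ≤ U t v)
    (hp : ∀ v T, ∃ t, T ≤ t ∧ ∃ i, p t i = v)
    (hWb : ∀ v, ∃ K, ∀ t, W t v ≤ K) (hq : ∀ v, ∃ T, ∀ t, T ≤ t → ∀ i, q t i ≠ v) : False := by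
  classical
  choose K hK using hWb
  choose τ hτ using fun v => hUb v (K v + 1)
  obtain ⟨t, ht, i, hi⟩ := hp (y ⟨0, hn⟩) (Finset.univ.sup fun i => τ (y i))
  choose T hT using hq
  set F := (hU t).finite.toFinset with hF
  have hlt : ∀ i, K (y i) + 1 ≤ U t (y i) := fun i =>
    (hτ (y i)).trans
      (hUm ((Finset.le_sup (f := fun i => τ (y i)) (Finset.mem_univ i)).trans ht) (y i))
  refine Reach.cut (hU t) (hW (F.sup T)) (fun i => ?_) (fun j => ?_) i _ hi
  · have := hlt i
    have := hK (y i) (F.sup T)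
    omega
  · by_contra hne
    exact hT (q (F.sup T) j) (F.sup T)
      (Finset.le_sup (f := T) (by simpa [hF] using hne)) j rfl

end Paths

end RWLM

namespace RWLM

/-! ### The walk driven by independent instructions -/

/-- An environment: `ω (v, k, a)` is the instruction carried out at the `k`-th exit from `v` if
the rotor at `v` points to `a` at that time. -/
abbrev Env (V : Type*) := V × ℕ × V → V

section Driven

variable {V : Type*}

/-- The successive rotors at `v` in the environment `ω` if `v` is exited infinitely often. -/
def stack (ρ : V → V) (ω : Env V) (v : V) : ℕ → V
  | 0 => ρ v
  | k + 1 => ω (v, k, stack ρ ω v k)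

/-- The coordinate of the environment that is read at time `t` in a given state, where `U`
counts the exits from each vertex so far. -/
def coord (n : ℕ) (hn : 0 < n) (t : ℕ) (s : State V n) (U : V → ℕ) : V × ℕ × V :=
  (s.1 (active n hn t), U (s.1 (active n hn t)), s.2 (s.1 (active n hn t)))

open Classical in
/-- The walk in the environment `ω`: its state together with the number of exits from each
vertex. -/
noncomputable def walk (n : ℕ) (hn : 0 < n) (x : Fin n → V) (ρ : V → V) (ω : Env V) :
    ℕ → State V n × (V → ℕ)
  | 0 => ((x, ρ), fun _ => 0)
  | t + 1 =>
    (apply' n (walk n hn x ρ ω t).1 (active n hn t)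
      (ω (coord n hn t (walk n hn x ρ ω t).1 (walk n hn x ρ ω t).2)),
     Function.update (walk n hn x ρ ω t).2 ((walk n hn x ρ ω t).1.1 (active n hn t))
      ((walk n hn x ρ ω t).2 ((walk n hn x ρ ω t).1.1 (active n hn t)) + 1))

/-- The sequence of moves of the walk in the environment `ω`. -/
noncomputable def moves (n : ℕ) (hn : 0 < n) (x : Fin n → V) (ρ : V → V) (ω : Env V) (t : ℕ) : V :=
  ω (coord n hn t (walk n hn x ρ ω t).1 (walk n hn x ρ ω t).2)

variable {n : ℕ} {hn : 0 < n} {x : Fin n → V} {ρ : V → V} {ω : Env V}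

theorem seq_moves (t : ℕ) : seq n hn x ρ (moves n hn x ρ ω) t = (walk n hn x ρ ω t).1 := by
  induction t with
  | zero => rfl
  | succ t ih => rw [seq, walk, ih, moves]

open Classical in
theorem walk_rotor (t : ℕ) (v : V) :
    (walk n hn x ρ ω t).1.2 v = stack ρ ω v ((walk n hn x ρ ω t).2 v) := by
  induction t with
  | zero => rfl
  | succ t ih =>
    simp only [walk, apply']
    by_cases hv : v = (walk n hn x ρ ω t).1.1 (active n hn t)
    · subst hv
      rw [Function.update_self, Function.update_self, coord, stack, ih]
    · rw [Function.update_of_ne hv, Function.update_of_ne hv, ih]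

theorem moves_eq (t : ℕ) : moves n hn x ρ ω t =
    stack ρ ω ((walk n hn x ρ ω t).1.1 (active n hn t))
      ((walk n hn x ρ ω t).2 ((walk n hn x ρ ω t).1.1 (active n hn t)) + 1) := by
  rw [stack, ← walk_rotor]; rfl

open Classical in
theorem walk_pos_succ (t : ℕ) : (walk n hn x ρ ω (t + 1)).1.1 =
    Function.update (walk n hn x ρ ω t).1.1 (active n hn t) (moves n hn x ρ ω t) := by
  simp only [walk, apply', moves]

theorem walk_count_succ_self (t : ℕ) :
    (walk n hn x ρ ω (t + 1)).2 ((walk n hn x ρ ω t).1.1 (active n hn t)) =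
      (walk n hn x ρ ω t).2 ((walk n hn x ρ ω t).1.1 (active n hn t)) + 1 := by
  simp only [walk, Function.update_self]

open Classical in
theorem walk_count_succ_of_ne (t : ℕ) {v : V} (hv : (walk n hn x ρ ω t).1.1 (active n hn t) ≠ v) :
    (walk n hn x ρ ω (t + 1)).2 v = (walk n hn x ρ ω t).2 v :=
  Function.update_of_ne hv.symm _ _

theorem walk_reach (t : ℕ) :
    Reach (stack ρ ω) x (walk n hn x ρ ω t).1.1 (walk n hn x ρ ω t).2 := by
  induction t with
  | zero => exact Reach.start
  | succ t ih =>
    have h := Reach.step _ _ (active n hn t) ih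
    rw [← moves_eq, ← walk_pos_succ] at h
    exact h

theorem walk_count_mono : Monotone fun t => (walk n hn x ρ ω t).2 := by
  refine monotone_nat_of_le_succ fun t v => ?_
  by_cases hv : (walk n hn x ρ ω t).1.1 (active n hn t) = v
  · subst hv
    simp only [walk_count_succ_self]
    omega
  · simp only [walk_count_succ_of_ne t hv, le_refl]

theorem walk_count_lt {s t : ℕ} (hst : s < t) {v : V}
    (hv : (walk n hn x ρ ω s).1.1 (active n hn s) = v) :
    (walk n hn x ρ ω s).2 v < (walk n hn x ρ ω t).2 v := by
  subst hv
  refine Nat.lt_of_succ_le ?_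
  rw [Nat.succ_eq_add_one, ← walk_count_succ_self]
  exact walk_count_mono (Nat.succ_le_of_lt hst) _

/-- The vertex `v` is visited infinitely often by the walk in the environment `ω`. -/
def Visited (n : ℕ) (hn : 0 < n) (x : Fin n → V) (ρ : V → V) (ω : Env V) (v : V) : Prop :=
  ∀ T, ∃ t, T ≤ t ∧ ∃ i, (walk n hn x ρ ω t).1.1 i = v

theorem recurrent_moves_iff :
    Recurrent n hn x ρ (moves n hn x ρ ω) ↔ ∀ v, Visited n hn x ρ ω v := by
  unfold Recurrent Visited
  refine forall_congr' fun v => ?_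
  simp only [seq_moves]
  rw [← Nat.frequently_atTop_iff_infinite, Filter.frequently_atTop]

/-- Every walker moves every `n` steps, so each visit is followed by an exit. -/
theorem Visited.count_unbounded {v : V} (h : Visited n hn x ρ ω v) (K : ℕ) :
    ∃ t, K ≤ (walk n hn x ρ ω t).2 v := by
  induction K with
  | zero => exact ⟨0, by simp⟩
  | succ K ih =>
    obtain ⟨t, ht⟩ := ih
    obtain ⟨t', htt', i, hi⟩ := h t
    by_contra! hK
    have aux : ∀ m, (walk n hn x ρ ω (t' + m)).1.1 i = v → active n hn (t' + m) ≠ i := by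
      intro m hm hact
      have h1 := hK (t' + m + 1)
      have h2 := walk_count_lt (ρ := ρ) (ω := ω) (Nat.lt_add_one (t' + m)) (hact ▸ hm)
      have h3 : (walk n hn x ρ ω t).2 v ≤ (walk n hn x ρ ω (t' + m)).2 v :=
        walk_count_mono (htt'.trans (Nat.le_add_right t' m)) v
      omega
    have stay : ∀ m, (walk n hn x ρ ω (t' + m)).1.1 i = v := by
      intro m
      induction m with
      | zero => exact hi
      | succ m ih =>
        rw [← add_assoc, walk_pos_succ, Function.update_of_ne (aux m ih).symm, ih]
    obtain ⟨m, hm⟩ : ∃ m, t' + m = n * t' + i := by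
      refine ⟨n * t' + i - t', ?_⟩
      have : t' ≤ n * t' := Nat.le_mul_of_pos_left _ hn
      omega
    refine aux m (stay m) (Fin.ext ?_)
    rw [hm]
    simp [active, Nat.mod_eq_of_lt i.2]

theorem exists_exit {v : V} {k t : ℕ} (h : k + 1 ≤ (walk n hn x ρ ω t).2 v) :
    ∃ s < t, (walk n hn x ρ ω s).1.1 (active n hn s) = v ∧ (walk n hn x ρ ω s).2 v = k := by
  induction t with
  | zero => simp [walk] at h
  | succ t ih =>
    by_cases hk : k + 1 ≤ (walk n hn x ρ ω t).2 v
    · obtain ⟨s, hs, h'⟩ := ih hk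
      exact ⟨s, by omega, h'⟩
    · by_cases hv : (walk n hn x ρ ω t).1.1 (active n hn t) = v
      · refine ⟨t, by omega, hv, ?_⟩
        have h2 := walk_count_succ_self (n := n) (hn := hn) (x := x) (ρ := ρ) (ω := ω) t
        rw [hv] at h2
        omega
      · rw [walk_count_succ_of_ne t hv] at h
        exact absurd h hk

theorem count_bounded_of_not_visited {v : V} (h : ¬ Visited n hn x ρ ω v) :
    ∃ K, ∀ t, (walk n hn x ρ ω t).2 v ≤ K := by
  by_contra! hK
  refine h fun T => ?_
  obtain ⟨t, ht⟩ := hK ((walk n hn x ρ ω T).2 v)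
  obtain ⟨s, -, hs, hs'⟩ := exists_exit (Nat.succ_le_of_lt ht)
  by_cases hT : T ≤ s
  · exact ⟨s, hT, _, hs⟩
  · have h1 := walk_count_succ_self (n := n) (hn := hn) (x := x) (ρ := ρ) (ω := ω) s
    rw [hs] at h1
    have h3 := walk_count_mono (n := n) (hn := hn) (x := x) (ρ := ρ) (ω := ω)
      (show s + 1 ≤ T by omega) v
    simp only at h3
    omega

/-- Every neighbor of `v` occurs infinitely often in the stack of instructions at `v`. -/
def Good (G : SimpleGraph V) (ξ : V → ℕ → V) : Prop :=
  ∀ v b, G.Adj v b → ∀ N, ∃ k, N ≤ k ∧ ξ v k = b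

theorem Visited.of_adj {G : SimpleGraph V} (hg : Good G (stack ρ ω)) {v b : V} (hvb : G.Adj v b)
    (h : Visited n hn x ρ ω v) : Visited n hn x ρ ω b := by
  intro T
  obtain ⟨k, hk, hkb⟩ := hg v b hvb ((walk n hn x ρ ω T).2 v + 1)
  obtain ⟨k, rfl⟩ : ∃ k', k = k' + 1 := ⟨k - 1, by omega⟩
  obtain ⟨t, ht⟩ := h.count_unbounded (k + 1)
  obtain ⟨s, -, hs, hs'⟩ := exists_exit ht
  have hTs : T ≤ s := by
    by_contra hT
    have h1 := walk_count_lt (not_le.1 hT) hs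
    omega
  refine ⟨s + 1, by omega, active n hn s, ?_⟩
  rw [walk_pos_succ, Function.update_self, moves_eq, hs, hs', hkb]

theorem Visited.all {G : SimpleGraph V} (hG : G.Connected) (hg : Good G (stack ρ ω)) {v : V}
    (h : Visited n hn x ρ ω v) (w : V) : Visited n hn x ρ ω w := by
  obtain ⟨q⟩ := hG.preconnected v w
  induction q with
  | nil => exact h
  | cons hadj _ ih => exact ih (h.of_adj hg hadj)

/-- A vertex that is not visited infinitely often makes the walk transient everywhere. -/
theorem not_visited_of_not_recurrent {G : SimpleGraph V} (hG : G.Connected)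
    (hg : Good G (stack ρ ω)) (h : ¬ Recurrent n hn x ρ (moves n hn x ρ ω)) (v : V) :
    ¬ Visited n hn x ρ ω v := fun hv => h (recurrent_moves_iff.2 (hv.all hG hg))

/-- In a good environment, recurrence does not depend on the initial locations. -/
theorem recurrent_of_recurrent {G : SimpleGraph V} (hG : G.Connected)
    (hg : Good G (stack ρ ω)) (y : Fin n → V)
    (h : Recurrent n hn x ρ (moves n hn x ρ ω)) : Recurrent n hn y ρ (moves n hn y ρ ω) := by
  by_contra hy
  have hy' := not_visited_of_not_recurrent hG hg hy
  rw [recurrent_moves_iff] at h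
  refine not_recurrent_of_transient hn (walk_reach (n := n) (hn := hn) (x := x) (ρ := ρ) (ω := ω))
    (walk_reach (n := n) (hn := hn) (x := y) (ρ := ρ) (ω := ω)) walk_count_mono
    (fun v K => (h v).count_unbounded K) h (fun v => count_bounded_of_not_visited (hy' v))
    fun v => ?_
  have := hy' v
  unfold Visited at this
  push Not at this
  exact this

open Classical in
/-- The reindexing for which `ω ∘ shiftIdx v` is the environment `ω` with the instructions
`ω (v, 0, a)` for the first exit from `v` discarded. -/
noncomputable def shiftIdx (v : V) (e : V × ℕ × V) : V × ℕ × V :=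
  if e.1 = v then (e.1, e.2.1 + 1, e.2.2) else e

theorem shiftIdx_injective (v : V) : Function.Injective (shiftIdx v) := by
  rintro ⟨v1, k1, a1⟩ ⟨v2, k2, a2⟩ h
  unfold shiftIdx at h
  split_ifs at h with h1 h2 h2 <;> simp_all

theorem shiftIdx_ne (v a : V) (e : V × ℕ × V) : shiftIdx v e ≠ (v, 0, a) := by
  unfold shiftIdx
  split_ifs with h
  · simp
  · intro he; rw [he] at h; exact h rfl

theorem stack_shift_self (v a : V) (k : ℕ) (hc : a = ω (v, 0, ρ v)) {ρ' : V → V} (h : ρ' v = a) :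
    stack ρ' (ω ∘ shiftIdx v) v k = stack ρ ω v (k + 1) := by
  induction k with
  | zero => simp [stack, h, hc]
  | succ k ih =>
    rw [stack, ih]
    simp [shiftIdx, stack]

theorem stack_shift_of_ne {v w : V} (hw : w ≠ v) {ρ' : V → V} (h : ρ' w = ρ w) :
    stack ρ' (ω ∘ shiftIdx v) w = stack ρ ω w := by
  funext k
  induction k with
  | zero => simp [stack, h]
  | succ k ih =>
    rw [stack, ih]
    simp [shiftIdx, stack, hw]

open Classical in
/-- Carrying out the first instruction at `v` in advance does not affect recurrence. -/
theorem recurrent_shift_iff {G : SimpleGraph V} (hG : G.Connected)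
    (hg : Good G (stack ρ ω)) (x : Fin n → V) (v : V) :
    Recurrent n hn x ρ (moves n hn x ρ ω) ↔
      Recurrent n hn x (Function.update ρ v (ω (v, 0, ρ v)))
        (moves n hn x (Function.update ρ v (ω (v, 0, ρ v))) (ω ∘ shiftIdx v)) := by
  set c := ω (v, 0, ρ v) with hc
  set ρ' := Function.update ρ v c with hρ'
  set ω' := ω ∘ shiftIdx v with hω'
  have hs : ∀ k, stack ρ' ω' v k = stack ρ ω v (k + 1) :=
    fun k => stack_shift_self v c k hc (by simp [hρ'])
  have hs' : ∀ w, w ≠ v → stack ρ' ω' w = stack ρ ω w :=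
    fun w hw => stack_shift_of_ne hw (by simp [hρ', hw])
  have hg' : Good G (stack ρ' ω') := by
    intro w b hwb N
    by_cases hw : w = v
    · subst hw
      obtain ⟨k, hk, hkb⟩ := hg w b hwb (N + 1)
      exact ⟨k - 1, by omega, by rw [hs, Nat.sub_add_cancel (by omega), hkb]⟩
    · rw [hs' w hw]; exact hg w b hwb N
  -- The walk in the shifted environment, started with walker `0` just after its jump from `v`.
  set i0 : Fin n := ⟨0, hn⟩
  set z : Fin n → V := Function.update (fun _ => v) i0 c with hz
  have hreach := fun t => (walk_reach (n := n) (hn := hn) (x := z) (ρ := ρ') (ω := ω') t).shift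
    (ξ := stack ρ ω) (x := fun _ => v) i0 rfl (fun j hj => by simp [hz, hj])
    (by simp [hz, hc, stack]) hs hs'
  choose W hW hWv hWne using hreach
  constructor
  · intro h
    by_contra hx
    have hz' : ¬ Recurrent n hn z ρ' (moves n hn z ρ' ω') :=
      fun hr => hx (recurrent_of_recurrent hG hg' x hr)
    have hz'' := not_visited_of_not_recurrent hG hg' hz'
    rw [recurrent_moves_iff] at h
    refine not_recurrent_of_transient hn
      (walk_reach (n := n) (hn := hn) (x := x) (ρ := ρ) (ω := ω)) hW walk_count_mono
      (fun v K => (h v).count_unbounded K) h (fun w => ?_) fun v => ?_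
    · obtain ⟨K, hK⟩ := count_bounded_of_not_visited (hz'' w)
      refine ⟨K + 1, fun t => ?_⟩
      have := hK t
      by_cases hw : w = v
      · subst hw; rw [hWv]; omega
      · rw [hWne t w hw]; omega
    · have := hz'' v
      unfold Visited at this
      push Not at this
      exact this
  · intro h
    by_contra hx
    have hx' := not_visited_of_not_recurrent hG hg hx
    have hr := recurrent_moves_iff.1 (recurrent_of_recurrent hG hg' z h)
    refine not_recurrent_of_transient hn hW
      (walk_reach (n := n) (hn := hn) (x := x) (ρ := ρ) (ω := ω)) ?_ (fun w K => ?_) hr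
      (fun v => count_bounded_of_not_visited (hx' v)) fun v => ?_
    · intro s t hst w
      have := walk_count_mono (n := n) (hn := hn) (x := z) (ρ := ρ') (ω := ω') hst w
      simp only at this
      by_cases hw : w = v
      · subst hw; rw [hWv, hWv]; exact Nat.succ_le_succ this
      · rwa [hWne _ w hw, hWne _ w hw]
    · obtain ⟨t, ht⟩ := (hr w).count_unbounded K
      refine ⟨t, ?_⟩
      by_cases hw : w = v
      · subst hw; rw [hWv]; omega
      · rwa [hWne _ w hw]
    · have := hx' v
      unfold Visited at this
      push Not at this
      exact this

end Driven

end RWLM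

namespace RWLM

/-! ### Subharmonic functions of a local mechanism -/

/-- Maximum principle: a subharmonic function of an irreducible chain on a finite set is
constant. -/
theorem eq_of_subharmonic {V : Type*} {G : SimpleGraph V} (hGlf : G.LocallyFinite)
    {mech : V → V → V → ℝ≥0∞} (hmech : IsMechanism G mech) (v : V) (f : V → ℝ≥0∞)
    (hf1 : ∀ a, f a ≤ 1) (hf : ∀ a, G.Adj v a → f a ≤ ∑' c, mech v a c * f c)
    {a b : V} (ha : G.Adj v a) (hb : G.Adj v b) : f a = f b := by
  classical
  have hfin : (G.neighborSet v).Finite := @Set.toFinite _ _ (@Finite.of_fintype _ (hGlf v))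
  obtain ⟨m, hm, hmax⟩ := Set.exists_max_image (G.neighborSet v) f hfin ⟨a, ha⟩
  have hmax' : ∀ c, G.Adj v c → f c ≤ f m := hmax
  have hM : f m ≠ ∞ := ne_top_of_le_ne_top ENNReal.one_ne_top (hf1 m)
  have step : ∀ d c, G.Adj v d → f d = f m → mech v d c ≠ 0 → f c = f m := by
    intro d c hd hdm hdc
    by_contra hne
    have hlt : f c < f m := lt_of_le_of_ne (hmax' c (hmech.support v d c hdc)) hne
    have hc1 : mech v d c ≠ ∞ := ne_top_of_le_ne_top ENNReal.one_ne_top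
      ((ENNReal.le_tsum c).trans (hmech.total v d).le)
    have htot : ∑' c, mech v d c * f m = f m := by
      rw [ENNReal.tsum_mul_right, hmech.total, one_mul]
    have hle : ∀ c, mech v d c * f c ≤ mech v d c * f m := by
      intro c
      by_cases h0 : mech v d c = 0
      · simp [h0]
      · exact mul_le_mul_right (hmax' c (hmech.support v d c h0)) _
    have h1 : ∑' c, mech v d c * f c < ∑' c, mech v d c * f m :=
      ENNReal.tsum_lt_tsum
        (ne_top_of_le_ne_top hM ((ENNReal.tsum_le_tsum hle).trans htot.le)) hle
        ((ENNReal.mul_lt_mul_iff_right hdc hc1).2 hlt)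
    rw [htot, ← hdm] at h1
    exact absurd (hf d hd) (not_le.2 h1)
  have prop : ∀ k d c, G.Adj v d → f d = f m → 0 < mechPow mech v k d c → f c = f m := by
    intro k
    induction k with
    | zero =>
      intro d c _ hdm h
      by_cases hdc : d = c
      · rwa [← hdc]
      · simp [mechPow, hdc] at h
    | succ k ih =>
      intro d c hd hdm h
      have : ∃ e, mech v d e * mechPow mech v k e c ≠ 0 := by
        by_contra! h0
        simp [mechPow, h0] at h
      obtain ⟨e, he⟩ := this
      have he1 := left_ne_zero_of_mul he
      exact ih e c (hmech.support v d e he1) (step d e hd hdm he1)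
        (pos_iff_ne_zero.2 (right_ne_zero_of_mul he))
  have all : ∀ c, G.Adj v c → f c = f m := by
    intro c hc
    obtain ⟨k, hk⟩ := hmech.irreducible v m c hm hc
    exact prop k m c hm rfl hk
  rw [all a ha, all b hb]

/-! ### The law of the environment -/

section Law

variable {V : Type*} [MeasurableSpace V]

/-- The law of a single instruction at `v` when the rotor points to `a`. -/
noncomputable def stepLaw (mech : V → V → V → ℝ≥0∞) (hm : ∀ v a, ∑' b, mech v a b = 1) (v a : V) :
    Measure V :=
  PMF.toMeasure ⟨mech v a, (hm v a) ▸ ENNReal.summable.hasSum⟩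

/-- The law of the environment: the instructions `ω (v, k, a)` are independent with law
`mech v a`. -/
noncomputable def envLaw (mech : V → V → V → ℝ≥0∞) (hm : ∀ v a, ∑' b, mech v a b = 1) :
    Measure (Env V) :=
  Measure.infinitePi fun e : V × ℕ × V => stepLaw mech hm e.1 e.2.2

variable {mech : V → V → V → ℝ≥0∞} {hm : ∀ v a, ∑' b, mech v a b = 1}

instance (v a : V) : IsProbabilityMeasure (stepLaw mech hm v a) :=
  PMF.toMeasure.isProbabilityMeasure _

instance : IsProbabilityMeasure (envLaw mech hm) := by
  unfold envLaw; infer_instance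

theorem measurable_shift (v : V) : Measurable fun ω : Env V => ω ∘ shiftIdx v :=
  measurable_pi_lambda _ fun e => measurable_pi_apply (shiftIdx v e)

variable [DiscreteMeasurableSpace V]

theorem stepLaw_singleton (v a c : V) : stepLaw mech hm v a {c} = mech v a c :=
  PMF.toMeasure_apply_singleton _ _ (MeasurableSet.singleton c)

theorem measurableSet_env (e : V × ℕ × V) (c : V) : MeasurableSet {ω : Env V | ω e = c} :=
  (measurable_pi_apply (X := fun _ : V × ℕ × V => V) e) (MeasurableSet.singleton c)

/-- The first instruction at `v` is independent of the shifted environment, and the latter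
has the same law as the environment. -/
theorem envLaw_shift (v a c : V) {E : Set (Env V)} (hE : MeasurableSet E) :
    envLaw mech hm ({ω | ω (v, 0, a) = c} ∩ {ω | ω ∘ shiftIdx v ∈ E}) =
      mech v a c * envLaw mech hm E := by
  classical
  set P := envLaw mech hm with hP
  have hc : P {ω | ω (v, 0, a) = c} = mech v a c := by
    have := Measure.infinitePi_pi (fun e : V × ℕ × V =>
      stepLaw mech hm e.1 e.2.2)
      (s := {(v, 0, a)}) (t := fun _ => {c}) (fun _ _ => MeasurableSet.singleton c)
    rw [Finset.prod_singleton, stepLaw_singleton] at this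
    rw [← this, hP, envLaw]
    congr 1
    ext ω
    simp
  by_cases h0 : mech v a c = 0
  · rw [h0, zero_mul]
    exact measure_mono_null Set.inter_subset_left (hc.trans h0)
  have htop : mech v a c ≠ ∞ := ne_top_of_le_ne_top ENNReal.one_ne_top
    ((ENNReal.le_tsum c).trans (hm v a).le)
  have key : (mech v a c)⁻¹ • (P.restrict {ω | ω (v, 0, a) = c}).map (fun ω => ω ∘ shiftIdx v)
      = P := by
    rw [hP, envLaw]
    refine Measure.eq_infinitePi _ fun s t ht => ?_
    rw [Measure.smul_apply, Measure.map_apply (measurable_shift v)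
      (MeasurableSet.pi s.countable_toSet fun i _ => ht i),
      Measure.restrict_apply (measurable_shift v
      (MeasurableSet.pi s.countable_toSet fun i _ => ht i))]
    set t' : V × ℕ × V → Set V := fun e =>
      if e = (v, 0, a) then {c} else Function.extend (shiftIdx v) t (fun _ => Set.univ) e with ht'
    have ht'0 : t' (v, 0, a) = {c} := by simp [ht']
    have ht's : ∀ e, t' (shiftIdx v e) = t e := fun e => by
      simp only [ht', if_neg (shiftIdx_ne v a e)]
      exact (shiftIdx_injective v).extend_apply _ _ _
    have hset : (fun ω : Env V => ω ∘ shiftIdx v) ⁻¹' (Set.pi s t) ∩ {ω | ω (v, 0, a) = c} =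
        Set.pi (↑(insert (v, 0, a) (s.image (shiftIdx v)))) t' := by
      ext ω
      rw [Finset.coe_insert, Finset.coe_image, Set.insert_pi, ht'0]
      constructor
      · rintro ⟨h1, h2⟩
        refine ⟨h2, ?_⟩
        rintro _ ⟨e, he, rfl⟩
        rw [ht's]
        exact h1 e he
      · rintro ⟨h1, h2⟩
        refine ⟨fun e he => ?_, h1⟩
        rw [← ht's]
        exact h2 _ ⟨e, he, rfl⟩
    rw [hset, Measure.infinitePi_pi _ (fun i _ => MeasurableSet.of_discrete),
      Finset.prod_insert (by simp [-Prod.exists, shiftIdx_ne]),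
      Finset.prod_image (fun x _ y _ h => shiftIdx_injective v h), ht'0,
      stepLaw_singleton]
    have : ∀ i : V × ℕ × V, (shiftIdx v i).1 = i.1 ∧ (shiftIdx v i).2.2 = i.2.2 := by
      intro i; unfold shiftIdx; split_ifs <;> simp
    simp only [ht's, (this _).1, (this _).2, smul_eq_mul]
    rw [← mul_assoc]
    change (mech v a c)⁻¹ * mech v a c * _ = _
    rw [ENNReal.inv_mul_cancel h0 htop, one_mul]
  conv_rhs => rw [← key]
  rw [Measure.smul_apply, Measure.map_apply (measurable_shift v) hE,
    Measure.restrict_apply (measurable_shift v hE), smul_eq_mul, ← mul_assoc,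
    ENNReal.mul_inv_cancel h0 htop, one_mul, Set.inter_comm]
  rfl

/-- Conditioning on the first instruction at `v`. -/
theorem envLaw_first_step [Countable V] (v a : V) {E : V → Set (Env V)}
    (hE : ∀ c, MeasurableSet (E c)) :
    envLaw mech hm {ω | ω ∘ shiftIdx v ∈ E (ω (v, 0, a))} =
      ∑' c, mech v a c * envLaw mech hm (E c) := by
  have hset : {ω : Env V | ω ∘ shiftIdx v ∈ E (ω (v, 0, a))} =
      ⋃ c, ({ω | ω (v, 0, a) = c} ∩ {ω | ω ∘ shiftIdx v ∈ E c}) := by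
    ext ω; simp
  rw [hset, measure_iUnion]
  · exact tsum_congr fun c => envLaw_shift v a c (hE c)
  · intro c d hcd
    refine Set.disjoint_left.2 fun ω h1 h2 => hcd ?_
    exact h1.1.symm.trans h2.1
  · intro c
    exact (measurableSet_env (v, 0, a) c).inter
      (measurable_shift v (hE c))

theorem measurable_stack [Countable V] (ρ : V → V) (v : V) (k : ℕ) :
    Measurable fun ω : Env V => stack ρ ω v k := by
  induction k with
  | zero => exact measurable_const
  | succ k ih =>
    refine measurable_to_countable' fun d => ?_
    have : (fun ω : Env V => stack ρ ω v (k + 1)) ⁻¹' {d} =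
        ⋃ c, ({ω | stack ρ ω v k = c} ∩ {ω | ω (v, k, c) = d}) := by
      ext ω; simp [stack]
    rw [this]
    exact MeasurableSet.iUnion fun c => (ih (MeasurableSet.singleton c)).inter
      (measurableSet_env (v, k, c) d)

/-- The rotor at `v` almost surely points to a given neighbor infinitely often. -/
theorem stack_hits [Countable V] {G : SimpleGraph V} (hGlf : G.LocallyFinite)
    (hmech : IsMechanism G mech) {v b : V} (hb : G.Adj v b) (N : ℕ) (a : V) (ha : G.Adj v a) :
    envLaw mech hm {ω | ∀ k, N ≤ k → stack (fun _ => a) ω v k ≠ b} = 0 := by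
  have hmeas : ∀ N a, MeasurableSet {ω : Env V | ∀ k, N ≤ k → stack (fun _ => a) ω v k ≠ b} := by
    intro N a
    have : {ω : Env V | ∀ k, N ≤ k → stack (fun _ => a) ω v k ≠ b} =
        ⋂ k, ⋂ (_ : N ≤ k), (fun ω => stack (fun _ => a) ω v k) ⁻¹' {b}ᶜ := by
      ext ω; simp
    rw [this]
    exact MeasurableSet.iInter fun k => MeasurableSet.iInter fun _ =>
      measurable_stack _ v k MeasurableSet.of_discrete
  have hs : ∀ a k (ω : Env V), stack (fun _ => a) ω v (k + 1) =
      stack (fun _ => ω (v, 0, a)) (ω ∘ shiftIdx v) v k :=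
    fun a k ω => (stack_shift_self v _ k rfl rfl).symm
  induction N generalizing a with
  | zero =>
    have hbb : envLaw mech hm {ω | ∀ k, 0 ≤ k → stack (fun _ => b) ω v k ≠ b} = 0 := by
      convert measure_empty (μ := envLaw mech hm)
      ext ω
      simp only [Set.mem_ofPred_eq, Set.mem_empty_iff_false, iff_false]
      exact fun h => h 0 le_rfl rfl
    rw [← hbb]
    refine eq_of_subharmonic hGlf hmech v
      (fun a => envLaw mech hm {ω | ∀ k, 0 ≤ k → stack (fun _ => a) ω v k ≠ b})
      (fun a => prob_le_one) (fun a _ => ?_) ha hb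
    rw [← envLaw_first_step (hm := hm) v a (hmeas 0)]
    refine measure_mono fun ω h k _ => ?_
    rw [← hs]
    exact h (k + 1) (Nat.zero_le _)
  | succ N ih =>
    refine le_antisymm ?_ zero_le
    calc envLaw mech hm {ω | ∀ k, N + 1 ≤ k → stack (fun _ => a) ω v k ≠ b}
        ≤ envLaw mech hm {ω | ω ∘ shiftIdx v ∈
            {ω' | ∀ k, N ≤ k → stack (fun _ => ω (v, 0, a)) ω' v k ≠ b}} := by
          refine measure_mono fun ω h k hk => ?_
          rw [← hs]
          exact h (k + 1) (by omega)
      _ = ∑' c, mech v a c *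
            envLaw mech hm {ω | ∀ k, N ≤ k → stack (fun _ => c) ω v k ≠ b} :=
          envLaw_first_step v a (E := fun c => {ω' | ∀ k, N ≤ k → stack (fun _ => c) ω' v k ≠ b})
            (hmeas N)
      _ = 0 := by
          refine ENNReal.tsum_eq_zero.2 fun c => ?_
          by_cases h0 : mech v a c = 0
          · rw [h0, zero_mul]
          · rw [ih c (hmech.support v a c h0), mul_zero]

theorem ae_good [Countable V] {G : SimpleGraph V} (hGlf : G.LocallyFinite)
    (hmech : IsMechanism G mech) {ρ : V → V} (hρ : IsRotor G ρ) :
    ∀ᵐ ω ∂envLaw mech hm, Good G (stack ρ ω) := by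
  have hst : ∀ (ω : Env V) v k, stack ρ ω v k = stack (fun _ => ρ v) ω v k := by
    intro ω v k
    induction k with
    | zero => rfl
    | succ k ih => rw [stack, stack, ih]
  unfold Good
  simp only [ae_all_iff]
  intro v b hvb N
  rw [ae_iff]
  convert stack_hits (hm := hm) hGlf hmech hvb N (ρ v) (hρ v) using 2
  ext ω
  simp [hst]

end Law

end RWLM

namespace RWLM

/-! ### The law of the walk -/

section WalkLaw

variable {V : Type*}

open Classical in
/-- The number of exits from each vertex before time `t` along the trajectory `y`. -/
noncomputable def exits (n : ℕ) (hn : 0 < n) (x : Fin n → V) (ρ : V → V) (y : ℕ → V) :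
    ℕ → V → ℕ
  | 0 => fun _ => 0
  | t + 1 => Function.update (exits n hn x ρ y t) ((seq n hn x ρ y t).1 (active n hn t))
      (exits n hn x ρ y t ((seq n hn x ρ y t).1 (active n hn t)) + 1)

/-- The coordinate of the environment that governs the move at time `t` of the trajectory `y`. -/
noncomputable def readAt (n : ℕ) (hn : 0 < n) (x : Fin n → V) (ρ : V → V) (y : ℕ → V) (t : ℕ) :
    V × ℕ × V :=
  coord n hn t (seq n hn x ρ y t) (exits n hn x ρ y t)

variable {n : ℕ} {hn : 0 < n} {x : Fin n → V} {ρ : V → V}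

theorem exits_moves (ω : Env V) (t : ℕ) :
    exits n hn x ρ (moves n hn x ρ ω) t = (walk n hn x ρ ω t).2 := by
  induction t with
  | zero => rfl
  | succ t ih => rw [exits, walk, ih, seq_moves]

theorem moves_eq_readAt (ω : Env V) (t : ℕ) :
    moves n hn x ρ ω t = ω (readAt n hn x ρ (moves n hn x ρ ω) t) := by
  rw [readAt, seq_moves, exits_moves]; rfl

theorem seq_exits_congr {y c : ℕ → V} {t : ℕ} (h : ∀ s < t, y s = c s) :
    seq n hn x ρ y t = seq n hn x ρ c t ∧ exits n hn x ρ y t = exits n hn x ρ c t := by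
  induction t with
  | zero => exact ⟨rfl, rfl⟩
  | succ t ih =>
    obtain ⟨h1, h2⟩ := ih fun s hs => h s (by omega)
    rw [seq, seq, exits, exits, h1, h2, h t (by omega)]
    exact ⟨rfl, rfl⟩

theorem readAt_congr {y c : ℕ → V} {t : ℕ} (h : ∀ s < t, y s = c s) :
    readAt n hn x ρ y t = readAt n hn x ρ c t := by
  rw [readAt, readAt, (seq_exits_congr h).1, (seq_exits_congr h).2]

theorem moves_cylinder_iff (ω : Env V) (c : ℕ → V) (t : ℕ) :
    (∀ s < t, moves n hn x ρ ω s = c s) ↔ ∀ s < t, ω (readAt n hn x ρ c s) = c s := by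
  induction t with
  | zero => simp
  | succ t ih =>
    rw [Nat.forall_lt_succ_right, Nat.forall_lt_succ_right, ih]
    refine and_congr_right fun h => ?_
    rw [moves_eq_readAt, readAt_congr (ih.2 h)]

open Classical in
theorem exits_mono (y : ℕ → V) : Monotone (exits n hn x ρ y) := by
  refine monotone_nat_of_le_succ fun t v => ?_
  rw [exits]
  by_cases hv : v = (seq n hn x ρ y t).1 (active n hn t)
  · subst hv; simp
  · rw [Function.update_of_ne hv]

open Classical in
/-- The coordinates read at different times are different, since the exit count in the second
entry increases strictly each time a vertex is left. -/
theorem readAt_injective (y : ℕ → V) : Function.Injective (readAt n hn x ρ y) := by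
  intro s t
  wlog hst : s < t generalizing s t
  · intro h
    rcases lt_or_eq_of_le (not_lt.1 hst) with h' | h'
    · exact (this h' h.symm).symm
    · exact h'.symm
  intro h
  exfalso
  simp only [readAt, coord, Prod.mk.injEq] at h
  obtain ⟨h1, h2, -⟩ := h
  rw [← h1] at h2
  have h3 := exits_mono (n := n) (hn := hn) (x := x) (ρ := ρ) y (Nat.succ_le_of_lt hst)
    ((seq n hn x ρ y s).1 (active n hn s))
  rw [Nat.succ_eq_add_one, exits, Function.update_self] at h3
  exact (Nat.lt_of_succ_le h3).ne h2

/-- A finite sequence continued by the value `d`. -/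
def extendBy (d : V) {t : ℕ} (c : Fin t → V) (s : ℕ) : V := if h : s < t then c ⟨s, h⟩ else d

theorem extendBy_of_lt (d : V) (t : ℕ) (y : ℕ → V) (s : ℕ) (hs : s < t) :
    y s = extendBy d (fun i : Fin t => y i) s := by
  simp [extendBy, hs]

theorem IsRotor.update [DecidableEq V] {G : SimpleGraph V} (hρ : IsRotor G ρ) {v b : V}
    (hb : G.Adj v b) : IsRotor G (Function.update ρ v b) := by
  intro w
  by_cases hw : w = v
  · subst hw; rwa [Function.update_self]
  · rw [Function.update_of_ne hw]; exact hρ w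

variable [MeasurableSpace V] [DiscreteMeasurableSpace V]

theorem measurableSet_cylinder (t : ℕ) (c : ℕ → V) :
    MeasurableSet {y : ℕ → V | ∀ s < t, y s = c s} := by
  have : {y : ℕ → V | ∀ s < t, y s = c s} = ⋂ s, ⋂ (_ : s < t), (fun y => y s) ⁻¹' {c s} := by
    ext y; simp
  rw [this]
  exact MeasurableSet.iInter fun s => MeasurableSet.iInter fun _ =>
    measurable_pi_apply s (MeasurableSet.singleton _)

theorem measurable_moves [Countable V] : Measurable fun ω : Env V => moves n hn x ρ ω := by
  refine measurable_pi_lambda _ fun t => measurable_to_countable' fun a => ?_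
  have : (fun ω : Env V => moves n hn x ρ ω t) ⁻¹' {a} = ⋃ c : Fin t → V,
      ((⋂ s, ⋂ (_ : s < t), {ω | ω (readAt n hn x ρ (extendBy a c) s) = extendBy a c s}) ∩
        {ω | ω (readAt n hn x ρ (extendBy a c) t) = a}) := by
    ext ω
    simp only [Set.mem_preimage, Set.mem_singleton_iff, Set.mem_iUnion, Set.mem_inter_iff,
      Set.mem_iInter, Set.mem_ofPred_eq, ← moves_cylinder_iff]
    constructor
    · intro h
      refine ⟨fun i => moves n hn x ρ ω i, extendBy_of_lt a t _, ?_⟩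
      rw [← readAt_congr (extendBy_of_lt a t (moves n hn x ρ ω))]
      exact (moves_eq_readAt ω t).symm.trans h
    · rintro ⟨c, h1, h2⟩
      rw [moves_eq_readAt, readAt_congr h1, h2]
  rw [this]
  exact MeasurableSet.iUnion fun c => (MeasurableSet.iInter fun s => MeasurableSet.iInter fun _ =>
    measurableSet_env _ _).inter (measurableSet_env _ _)

theorem measurableSet_recurrent [Countable V] :
    MeasurableSet {y : ℕ → V | Recurrent n hn x ρ y} := by
  have h1 : ∀ t i v, MeasurableSet {y : ℕ → V | (seq n hn x ρ y t).1 i = v} := by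
    intro t i v
    have : {y : ℕ → V | (seq n hn x ρ y t).1 i = v} =
        ⋃ c : Fin t → V, ⋃ (_ : (seq n hn x ρ (extendBy v c) t).1 i = v),
          {y | ∀ s < t, y s = extendBy v c s} := by
      ext y
      simp only [Set.mem_ofPred_eq, Set.mem_iUnion, exists_prop]
      constructor
      · intro h
        refine ⟨fun i => y i, ?_, extendBy_of_lt v t y⟩
        rwa [← (seq_exits_congr (extendBy_of_lt v t y)).1]
      · rintro ⟨c, h, hc⟩
        rwa [(seq_exits_congr hc).1]
    rw [this]
    exact MeasurableSet.iUnion fun c => MeasurableSet.iUnion fun _ => measurableSet_cylinder _ _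
  have : {y : ℕ → V | Recurrent n hn x ρ y} =
      ⋂ v, ⋂ T, ⋃ t, ⋃ (_ : T ≤ t), ⋃ i, {y : ℕ → V | (seq n hn x ρ y t).1 i = v} := by
    ext y
    simp only [Recurrent, ← Nat.frequently_atTop_iff_infinite, Filter.frequently_atTop,
      Set.mem_ofPred_eq, Set.mem_iInter, Set.mem_iUnion, exists_prop]
  rw [this]
  exact MeasurableSet.iInter fun v => MeasurableSet.iInter fun T => MeasurableSet.iUnion fun t =>
    MeasurableSet.iUnion fun _ => MeasurableSet.iUnion fun i => h1 t i v

variable {mech : V → V → V → ℝ≥0∞} {hm : ∀ v a, ∑' b, mech v a b = 1}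

/-- The walk in a random environment is a random walk with local memory: the coordinates of the
environment read at different times are different, hence independent. -/
theorem isLaw_map_moves [Countable V] :
    IsLaw mech n hn x ρ ((envLaw mech hm).map fun ω => moves n hn x ρ ω) := by
  classical
  intro t c
  rw [Measure.map_apply measurable_moves (measurableSet_cylinder t c)]
  set T : V × ℕ × V → Set V := fun e =>
    {Function.extend (readAt n hn x ρ c) c (fun _ => c 0) e} with hT
  have hTr : ∀ s, T (readAt n hn x ρ c s) = {c s} := fun s => by
    simp only [hT, (readAt_injective c).extend_apply]
  have : (fun ω : Env V => moves n hn x ρ ω) ⁻¹' {y | ∀ s < t, y s = c s} =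
      Set.pi ↑((Finset.range t).image (readAt n hn x ρ c)) T := by
    ext ω
    rw [Set.mem_preimage, Set.mem_ofPred_eq, moves_cylinder_iff]
    simp only [Set.mem_pi, Finset.coe_image, Set.forall_mem_image, hTr, Set.mem_singleton_iff,
      Finset.coe_range, Set.mem_Iio]
  rw [this, envLaw, Measure.infinitePi_pi _ (fun i _ => MeasurableSet.of_discrete),
    Finset.prod_image (fun s _ t _ h => readAt_injective c h)]
  refine Finset.prod_congr rfl fun s _ => ?_
  rw [hTr, stepLaw_singleton]
  rfl

theorem isLaw_unique [Countable V] {μ ν : Measure (ℕ → V)} [IsProbabilityMeasure μ]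
    [IsProbabilityMeasure ν] (hμ : IsLaw mech n hn x ρ μ) (hν : IsLaw mech n hn x ρ ν) : μ = ν := by
  set C : Set (Set (ℕ → V)) := {A | ∃ (t : ℕ) (c : ℕ → V), A = {y : ℕ → V | ∀ s < t, y s = c s}} with hC
  refine ext_of_generate_finite C (le_antisymm ?_ ?_) ?_ ?_ (by simp)
  · refine iSup_le fun s => ?_
    rw [← measurable_iff_comap_le]
    refine @measurable_to_countable' _ _ _ _ (MeasurableSpace.generateFrom C) _ fun a => ?_
    have : (fun y : ℕ → V => y s) ⁻¹' {a} = ⋃ c : Fin (s + 1) → V,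
        ⋃ (_ : extendBy a c s = a), {y | ∀ r < s + 1, y r = extendBy a c r} := by
      ext y
      simp only [Set.mem_preimage, Set.mem_singleton_iff, Set.mem_iUnion, Set.mem_ofPred_eq,
        exists_prop]
      constructor
      · intro h
        refine ⟨fun i => y i, ?_, extendBy_of_lt a (s + 1) y⟩
        rw [← extendBy_of_lt a (s + 1) y s (by omega), h]
      · rintro ⟨c, h, hc⟩
        rw [hc s (by omega), h]
    rw [this]
    exact MeasurableSet.iUnion fun c => MeasurableSet.iUnion fun _ =>
      MeasurableSpace.measurableSet_generateFrom ⟨_, _, rfl⟩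
  · refine MeasurableSpace.generateFrom_le ?_
    rintro _ ⟨t, c, rfl⟩
    exact measurableSet_cylinder t c
  · rintro _ ⟨t, c, rfl⟩ _ ⟨t', c', rfl⟩ ⟨z, hz, hz'⟩
    refine ⟨max t t', z, ?_⟩
    ext y
    simp only [Set.mem_inter_iff, Set.mem_ofPred_eq] at hz hz' ⊢
    constructor
    · rintro ⟨h, h'⟩ s hs
      rcases lt_max_iff.1 hs with hs | hs
      · rw [h s hs, hz s hs]
      · rw [h' s hs, hz' s hs]
    · intro h
      exact ⟨fun s hs => by rw [h s (lt_max_of_lt_left hs), hz s hs],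
        fun s hs => by rw [h s (lt_max_of_lt_right hs), hz' s hs]⟩
  · rintro _ ⟨t, c, rfl⟩
    rw [hμ, hν]

/-! ### The recurrence probability as a harmonic function of a single rotor -/

/-- The recurrence probability of the walk in a random environment. -/
noncomputable def recProb (mech : V → V → V → ℝ≥0∞) (hm : ∀ v a, ∑' b, mech v a b = 1)
    (n : ℕ) (hn : 0 < n) (x : Fin n → V) (ρ : V → V) : ℝ≥0∞ :=
  envLaw mech hm {ω | Recurrent n hn x ρ (moves n hn x ρ ω)}

theorem IsLaw.recurrent_eq [Countable V] {μ : Measure (ℕ → V)} [IsProbabilityMeasure μ]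
    (hμ : IsLaw mech n hn x ρ μ) :
    μ {y | Recurrent n hn x ρ y} = recProb mech hm n hn x ρ := by
  have : IsProbabilityMeasure ((envLaw mech hm).map fun ω => moves n hn x ρ ω) :=
    Measure.isProbabilityMeasure_map measurable_moves.aemeasurable
  rw [isLaw_unique hμ (isLaw_map_moves (hm := hm)),
    Measure.map_apply measurable_moves measurableSet_recurrent]
  rfl

open Classical in
theorem recProb_harmonic [Countable V] {G : SimpleGraph V} (hG : G.Connected)
    (hGlf : G.LocallyFinite) (hmech : IsMechanism G mech) (hρ : IsRotor G ρ) (v : V) :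
    recProb mech hm n hn x ρ =
      ∑' c, mech v (ρ v) c * recProb mech hm n hn x (Function.update ρ v c) := by
  rw [recProb]
  have := envLaw_first_step (hm := hm) v (ρ v)
    (E := fun c => {ω | Recurrent n hn x (Function.update ρ v c)
      (moves n hn x (Function.update ρ v c) ω)})
    fun c => measurable_moves measurableSet_recurrent
  refine Eq.trans ?_ this
  refine measure_congr ?_
  filter_upwards [ae_good (hm := hm) hGlf hmech hρ] with ω hω
  exact propext (recurrent_shift_iff hG hω x v)

open Classical in
theorem recProb_update [Countable V] {G : SimpleGraph V} (hG : G.Connected)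
    (hGlf : G.LocallyFinite) (hmech : IsMechanism G mech) (hρ : IsRotor G ρ) {v b : V}
    (hb : G.Adj v b) :
    recProb mech hm n hn x (Function.update ρ v b) = recProb mech hm n hn x ρ := by
  have := eq_of_subharmonic hGlf hmech v
    (fun a => recProb mech hm n hn x (Function.update ρ v a)) (fun a => prob_le_one)
    (fun a ha => ?_) hb (hρ v)
  · simpa using this
  · have h := recProb_harmonic (hm := hm) (n := n) (hn := hn) (x := x) hG hGlf hmech
      (hρ.update ha) v
    simp only [Function.update_self, Function.update_idem] at h
    exact h.le

theorem recProb_eq_of_finite_diff [Countable V] {G : SimpleGraph V} (hG : G.Connected)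
    (hGlf : G.LocallyFinite) (hmech : IsMechanism G mech) {ρ ρ' : V → V} (hρ : IsRotor G ρ)
    (hρ' : IsRotor G ρ') (S : Finset V) (hdiff : ∀ v ∉ S, ρ v = ρ' v) :
    recProb mech hm n hn x ρ = recProb mech hm n hn x ρ' := by
  classical
  induction S using Finset.induction_on generalizing ρ with
  | empty => rw [show ρ = ρ' from funext fun v => hdiff v (by simp)]
  | insert v S _ ih =>
    rw [← recProb_update (x := x) hG hGlf hmech hρ (hρ' v)]
    refine ih (hρ.update (hρ' v)) fun w hw => ?_
    by_cases hwv : w = v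
    · subst hwv; rw [Function.update_self]
    · rw [Function.update_of_ne hwv]
      exact hdiff w (by simp [hwv, hw])

end WalkLaw

/-- A connected locally finite graph has countably many vertices. -/
theorem countable_of_connected {V : Type*} {G : SimpleGraph V} (hG : G.Connected)
    (hGlf : G.LocallyFinite) : Countable V := by
  obtain ⟨o⟩ := hG.nonempty
  have hfin : ∀ v, (G.neighborSet v).Countable := fun v =>
    (@Set.toFinite _ _ (@Finite.of_fintype _ (hGlf v))).countable
  let B : ℕ → Set V := fun k => Nat.rec {o} (fun _ A => ⋃ v ∈ A, G.neighborSet v) k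
  have hB : ∀ k, (B k).Countable := by
    intro k
    induction k with
    | zero => exact Set.countable_singleton o
    | succ k ih => exact ih.biUnion fun v _ => hfin v
  have hmem : ∀ (u w : V) (q : G.Walk u w) (k : ℕ), u ∈ B k → ∃ m, w ∈ B m := by
    intro u w q
    induction q with
    | nil => exact fun k hk => ⟨k, hk⟩
    | cons hadj _ ih => exact fun k hk => ih (k + 1) (Set.mem_biUnion hk hadj)
  rw [← Set.countable_univ_iff]
  refine (Set.countable_iUnion hB).mono fun w _ => ?_
  obtain ⟨q⟩ := hG.preconnected o w
  obtain ⟨m, hm⟩ := hmem o w q 0 rfl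
  exact Set.mem_iUnion.2 ⟨m, hm⟩

end RWLM

/-- **Lemma (the recurrence probability is invariant under finite changes of the rotor
configuration).**  Let `ρ` and `ρ'` be rotor configurations on `G` that differ at only
finitely many vertices.  Then, for the `n`-walker random walk with local memory,
`p_rec(ρ) = p_rec(ρ')`. -/
theorem rwlm_recurrence_prob_eq_of_finite_diff
    {V : Type*} [MeasurableSpace V] [DiscreteMeasurableSpace V]
    (G : SimpleGraph V) (hG : G.Connected) (hGlf : G.LocallyFinite)
    (mech : V → V → V → ℝ≥0∞) (hmech : RWLM.IsMechanism G mech)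
    (n : ℕ) (hn : 0 < n) (x0 : Fin n → V)
    (ρ ρ' : V → V) (hρ : RWLM.IsRotor G ρ) (hρ' : RWLM.IsRotor G ρ')
    (S : Finset V) (hdiff : ∀ x ∉ S, ρ x = ρ' x)
    (μ μ' : MeasureTheory.Measure (ℕ → V))
    [MeasureTheory.IsProbabilityMeasure μ] [MeasureTheory.IsProbabilityMeasure μ']
    (hμ : RWLM.IsLaw mech n hn x0 ρ μ) (hμ' : RWLM.IsLaw mech n hn x0 ρ' μ') :
    μ {y | RWLM.Recurrent n hn x0 ρ y} = μ' {y | RWLM.Recurrent n hn x0 ρ' y} := by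
  have := RWLM.countable_of_connected hG hGlf
  rw [hμ.recurrent_eq (hm := hmech.total), hμ'.recurrent_eq (hm := hmech.total),
    RWLM.recProb_eq_of_finite_diff hG hGlf hmech hρ hρ' S hdiff]
end
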